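/- arXiv:0911.0233 — 8 statements merged into one kernel-verified Lean document; each statement's English description precedes it below -/
import Mathlib

section
/- There is an absolute constant C > 0 such that for every integer N ≥ 1, every real K ≥ 2, every real β ≥ 3, and every t ∈ [0,1]: if the Lebesgue measure of { s ∈ ℝ : max_{0 ≤ n ≤ N} f_{n,t}(s) ≥ K } is strictly greater than K^{-3}, then for M := ⌈N·K^β⌉ the Lebesgue measure of { s ∈ ℝ : f_{M,t}(s) ≥ 1 } (the support of f_{M,t}) is at most C/K. -/
open MeasureTheory

/-- The weight `w(0)=0, w(1)=t, w(2)=1`. -/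
noncomputable def wgt (t : ℝ) : Fin 3 → ℝ := ![0, t, 1]

open scoped Classical in
/-- The projection multiplicity function `f_{n,t}(s)`: the number of digit strings
`a ∈ {0,1,2}^n` with `|s - ∑_{k=1}^n w(a_k) 3^{-k}| ≤ 3^{-n}`. -/
noncomputable def multFn (t : ℝ) (n : ℕ) (s : ℝ) : ℕ :=
  (Finset.univ.filter (fun a : Fin n → Fin 3 =>
    |s - ∑ k : Fin n, wgt t (a k) * (3 : ℝ) ^ (-(k.1 + 1 : ℤ))| ≤ (3 : ℝ) ^ (-(n : ℤ)))).card

/-- `max_{0 ≤ n ≤ N} f_{n,t}(s)`. -/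
noncomputable def multFnStar (t : ℝ) (N : ℕ) (s : ℝ) : ℕ :=
  (Finset.range (N + 1)).sup fun n => multFn t n s

/-!
Let `E = {f*_N ≥ K}`. Each `s ∈ E` has a level `n ≤ N` at which at least `K` pieces of length
comparable to `3⁻ⁿ` pile up on `s`, and the level-`N` descendants of these pieces stay within
`2 · 3⁻ⁿ` of `s`. A Vitali selection of such points `s` gives a set `G` of words of length `N`, of
density `δ ≥ K |E| / 20`, whose intervals are covered by a set of measure only `4δ / K`. Each of the
remaining words carries a copy of the whole construction scaled by `3⁻ᴺ`, so the measure `u` of the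
support satisfies `u (N + m) ≤ (4 / K) δ + (1 - δ) u m`. Iterating `M / N ≳ 1 / |E|` times
multiplies the initial deviation from the fixed point `4 / K` by `(1 - δ) ^ (M / N) ≲ 1 / K`.
-/

theorem one_sub_pow_mul_one_add_mul_le_one {δ : ℝ} (hδ : δ ∈ Set.Icc (0 : ℝ) 1) (l : ℕ) :
    (1 - δ) ^ l * (1 + l * δ) ≤ 1 := by
  obtain ⟨hδ₀, hδ₁⟩ := hδ
  calc (1 - δ) ^ l * (1 + l * δ)
      ≤ (1 - δ) ^ l * (1 + δ) ^ l :=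
        mul_le_mul_of_nonneg_left (one_add_mul_le_pow (by linarith) l)
          (pow_nonneg (sub_nonneg.2 hδ₁) l)
    _ = (1 - δ ^ 2) ^ l := by rw [← mul_pow]; ring
    _ ≤ 1 := pow_le_one₀ (by nlinarith) (by nlinarith)

theorem one_sub_pow_le {δ c : ℝ} (hδ : δ ∈ Set.Icc (0 : ℝ) 1) (hc : 0 ≤ c) {l : ℕ}
    (hl : 1 ≤ (l + 1) * (c * δ)) : (1 - δ) ^ l ≤ c := by
  have hpow : 0 ≤ (1 - δ) ^ l := pow_nonneg (sub_nonneg.2 hδ.2) l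
  have hcl : 1 ≤ c * (1 + l * δ) := by nlinarith [mul_nonneg hc (sub_nonneg.2 hδ.2)]
  calc (1 - δ) ^ l
      ≤ (1 - δ) ^ l * (c * (1 + l * δ)) := le_mul_of_one_le_right hpow hcl
    _ = c * ((1 - δ) ^ l * (1 + l * δ)) := by ring
    _ ≤ c := mul_le_of_le_one_right hc (one_sub_pow_mul_one_add_mul_le_one hδ l)

theorem one_le_div_add_one_mul {N M : ℕ} (hN : 0 < N) {x : ℝ} (hx : 0 ≤ x)
    (h : (N : ENNReal) ≤ M * ENNReal.ofReal x) : 1 ≤ ((M / N : ℕ) + 1) * x := by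
  have hN' : (0 : ℝ) < N := by exact_mod_cast hN
  have hMx : (N : ℝ) ≤ M * x := by
    rwa [← ENNReal.ofReal_natCast N, ← ENNReal.ofReal_natCast M,
      ← ENNReal.ofReal_mul M.cast_nonneg, ENNReal.ofReal_le_ofReal_iff (by positivity)] at h
  have hM : (M : ℝ) ≤ N * ((M / N : ℕ) + 1) := by
    exact_mod_cast (Nat.lt_mul_div_succ M hN).le
  refine le_of_mul_le_mul_left ?_ hN'
  calc (N : ℝ) * 1 ≤ M * x := by rwa [mul_one]
    _ ≤ N * ((M / N : ℕ) + 1) * x := by gcongr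
    _ = N * (((M / N : ℕ) + 1) * x) := mul_assoc _ _ _

theorem natCast_le_ceil_mul_rpow_mul {N p : ℕ} {K β : ℝ} (hK : 1 ≤ K) (hβ : p ≤ β)
    {v : ENNReal} (hv : ENNReal.ofReal ((K ^ p)⁻¹) ≤ v) :
    (N : ENNReal) ≤ ⌈(N : ℝ) * K ^ β⌉₊ * v := by
  have hpow : K ^ p ≤ K ^ β := by
    simpa only [Real.rpow_natCast] using Real.rpow_le_rpow_of_exponent_le hK hβ
  have hceil : (N : ℝ) ≤ ⌈(N : ℝ) * K ^ β⌉₊ * (K ^ p)⁻¹ := by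
    rw [← div_eq_mul_inv, le_div_iff₀ (by positivity)]
    exact (mul_le_mul_of_nonneg_left hpow N.cast_nonneg).trans (Nat.le_ceil _)
  calc (N : ENNReal) = ENNReal.ofReal N := (ENNReal.ofReal_natCast N).symm
    _ ≤ ENNReal.ofReal (⌈(N : ℝ) * K ^ β⌉₊ * (K ^ p)⁻¹) := ENNReal.ofReal_le_ofReal hceil
    _ = ⌈(N : ℝ) * K ^ β⌉₊ * ENNReal.ofReal ((K ^ p)⁻¹) := by
      rw [ENNReal.ofReal_mul (Nat.cast_nonneg _), ENNReal.ofReal_natCast]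
    _ ≤ ⌈(N : ℝ) * K ^ β⌉₊ * v := by gcongr

theorem le_of_affine_recurrence {u : ℕ → ℝ} {N : ℕ} {A δ : ℝ} (hδ : δ ≤ 1)
    (hu : ∀ m, u (N + m) ≤ A * δ + (1 - δ) * u m) (l : ℕ) :
    u (N * l) ≤ A + (1 - δ) ^ l * (u 0 - A) := by
  induction l with
  | zero => simp
  | succ l ih =>
    calc u (N * (l + 1))
        = u (N + N * l) := by rw [Nat.mul_succ, Nat.add_comm]
      _ ≤ A * δ + (1 - δ) * u (N * l) := hu _
      _ ≤ A * δ + (1 - δ) * (A + (1 - δ) ^ l * (u 0 - A)) := by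
        have : 0 ≤ 1 - δ := sub_nonneg.2 hδ
        gcongr
      _ = A + (1 - δ) ^ (l + 1) * (u 0 - A) := by ring

theorem take_appendEquiv {α : Type*} {n m : ℕ} (h : n ≤ n + m) (a : Fin n → α) (b : Fin m → α) :
    Fin.take n h (Fin.appendEquiv n m (a, b)) = a :=
  funext fun i => Fin.append_left a b i

theorem dens_filter_take {α : Type*} [Fintype α] [Nonempty α] {n N : ℕ} (h : n ≤ N)
    (p : (Fin n → α) → Prop) [DecidablePred p] :
    ({w : Fin N → α | p (Fin.take n h w)} : Finset (Fin N → α)).dens =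
      ({a | p a} : Finset (Fin n → α)).dens := by
  obtain ⟨m, rfl⟩ := Nat.exists_eq_add_of_le h
  have hcard : (({a | p a} : Finset (Fin n → α)) ×ˢ (Finset.univ : Finset (Fin m → α))).card =
      ({w | p (Fin.take n h w)} : Finset (Fin (n + m) → α)).card :=
    Finset.card_equiv (Fin.appendEquiv n m) fun ⟨a, b⟩ => by
      simp [take_appendEquiv]
  simp only [Finset.dens, ← hcard, Finset.card_product, Finset.card_univ, Fintype.card_fun,
    Fintype.card_fin, pow_add]
  push_cast
  exact mul_div_mul_right _ _ (by positivity)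

theorem finite_of_pairwiseDisjoint_finset {ι α : Type*} [Finite α] {u : Set ι} {T : ι → Finset α}
    (hT : u.PairwiseDisjoint T) (hne : ∀ i ∈ u, (T i).Nonempty) : u.Finite := by
  have hT' : u.PairwiseDisjoint fun i => (T i : Set α) := fun i hi j hj hij =>
    Finset.disjoint_coe.2 (hT hi hj hij)
  exact (hT'.finite_biUnion_iff.1 (Set.toFinite _)).2.subset fun i hi =>
    ⟨hi, Finset.coe_nonempty.2 (hne i hi)⟩

theorem volume_biUnion_closedBall_le {ι : Type*} (u : Finset ι) (x : ι → ℝ) {r : ι → ℝ}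
    (hr : ∀ i ∈ u, 0 ≤ r i) :
    volume (⋃ i ∈ u, Metric.closedBall (x i) (r i)) ≤ ENNReal.ofReal (2 * ∑ i ∈ u, r i) :=
  calc volume (⋃ i ∈ u, Metric.closedBall (x i) (r i))
      ≤ ∑ i ∈ u, volume (Metric.closedBall (x i) (r i)) := measure_biUnion_finset_le _ _
    _ = ∑ i ∈ u, ENNReal.ofReal (2 * r i) := by simp only [Real.volume_closedBall]
    _ = ENNReal.ofReal (2 * ∑ i ∈ u, r i) := by
      rw [Finset.mul_sum, ENNReal.ofReal_sum_of_nonneg fun i hi => mul_nonneg two_pos.le (hr i hi)]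

/-- The point `∑ₖ w(aₖ) 3⁻ᵏ` coded by a digit string `a`, whose digits are indexed from `0` here. -/
noncomputable def wordPoint (t : ℝ) {n : ℕ} (a : Fin n → Fin 3) : ℝ :=
  ∑ k, wgt t (a k) / 3 ^ (k.1 + 1)

/-- The interval of radius `3⁻ⁿ` about `wordPoint t a`: the set of `s` at which `multFn t n` counts
the digit string `a`. -/
def wordInterval (t : ℝ) {n : ℕ} (a : Fin n → Fin 3) : Set ℝ :=
  Metric.closedBall (wordPoint t a) (3 ^ n)⁻¹

/-- The expanding similarity that undoes the composition of contractions coded by `a`; it takes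
`wordInterval t a` onto `[-1, 1]`. -/
noncomputable def wordZoom (t : ℝ) {n : ℕ} (a : Fin n → Fin 3) (x : ℝ) : ℝ :=
  3 ^ n * (x - wordPoint t a)

/-- The support of `multFn t n`. -/
def multSupport (t : ℝ) (n : ℕ) : Set ℝ :=
  {s | 1 ≤ multFn t n s}

open scoped Classical in
/-- The digit strings of length `N` whose first `n` digits are counted by `multFn t n s`. -/
noncomputable def wordsNear (t : ℝ) {N : ℕ} (n : Fin (N + 1)) (s : ℝ) : Finset (Fin N → Fin 3) :=
  {w | s ∈ wordInterval t (Fin.take n n.is_le w)}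

section

variable {t : ℝ} {n m N : ℕ}

open scoped Classical in
theorem multFn_eq_card (t : ℝ) (n : ℕ) (s : ℝ) :
    multFn t n s = ({a | s ∈ wordInterval t a} : Finset (Fin n → Fin 3)).card := by
  have hpow (k : ℕ) : (3 : ℝ) ^ (-(k + 1 : ℤ)) = (3 ^ (k + 1))⁻¹ := by
    rw [zpow_neg]; norm_cast
  simp only [multFn, wordInterval, wordPoint, Metric.mem_closedBall, Real.dist_eq, hpow,
    zpow_neg, zpow_natCast, div_eq_mul_inv]

theorem mem_multSupport {s : ℝ} :
    s ∈ multSupport t n ↔ ∃ a : Fin n → Fin 3, s ∈ wordInterval t a := by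
  classical
  simp [multSupport, multFn_eq_card, Nat.one_le_iff_ne_zero, Finset.filter_eq_empty_iff]

theorem multSupport_zero (t : ℝ) : multSupport t 0 = Metric.closedBall 0 1 := by
  ext s
  simp [mem_multSupport, wordInterval, wordPoint]

theorem exists_le_multFn_of_le_multFnStar {K s : ℝ} (h : K ≤ multFnStar t N s) :
    ∃ n : Fin (N + 1), K ≤ multFn t n s := by
  obtain ⟨n, hn, hmax⟩ := Finset.exists_mem_eq_sup (Finset.range (N + 1)) (by simp)
    fun n => multFn t n s
  rw [multFnStar, hmax] at h
  exact ⟨⟨n, Finset.mem_range.1 hn⟩, h⟩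

theorem wordPoint_append (a : Fin n → Fin 3) (b : Fin m → Fin 3) :
    wordPoint t (Fin.append a b) = wordPoint t a + (3 ^ n)⁻¹ * wordPoint t b := by
  simp only [wordPoint, Fin.sum_univ_add, Fin.append_left, Fin.append_right, Finset.mul_sum,
    Fin.val_castAdd, Fin.val_natAdd]
  congr! 2 with k
  rw [add_assoc, pow_add, div_mul_eq_div_div]
  ring

theorem mem_wordInterval_iff_abs_wordZoom_le {a : Fin n → Fin 3} {x : ℝ} :
    x ∈ wordInterval t a ↔ |wordZoom t a x| ≤ 1 := by
  have hpow : (0 : ℝ) < 3 ^ n := by positivity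
  rw [wordInterval, Metric.mem_closedBall, Real.dist_eq, wordZoom, abs_mul, abs_of_pos hpow,
    ← le_inv_mul_iff₀ hpow, mul_one]

theorem mem_wordInterval_append {a : Fin n → Fin 3} {b : Fin m → Fin 3} {x : ℝ} :
    x ∈ wordInterval t (Fin.append a b) ↔ wordZoom t a x ∈ wordInterval t b := by
  have hzoom : wordZoom t (Fin.append a b) x = wordZoom t b (wordZoom t a x) := by
    simp only [wordZoom, wordPoint_append, pow_add]
    field_simp
    ring
  rw [mem_wordInterval_iff_abs_wordZoom_le, hzoom, mem_wordInterval_iff_abs_wordZoom_le]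

theorem multSupport_add (t : ℝ) (n m : ℕ) :
    multSupport t (n + m) = ⋃ a : Fin n → Fin 3, wordZoom t a ⁻¹' multSupport t m := by
  ext x
  simp only [mem_multSupport, (Fin.appendEquiv n m).surjective.exists, Prod.exists,
    Set.mem_iUnion, Set.mem_preimage]
  exact exists₂_congr fun a b => mem_wordInterval_append

theorem volume_real_wordZoom_preimage (a : Fin n → Fin 3) (X : Set ℝ) :
    volume.real (wordZoom t a ⁻¹' X) = volume.real X / 3 ^ n := by
  have hcomp : wordZoom t a ⁻¹' X =
      (fun x => x + -wordPoint t a) ⁻¹' ((fun y => (3 : ℝ) ^ n * y) ⁻¹' X) := by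
    simp only [← sub_eq_add_neg]; rfl
  rw [hcomp, Measure.real, measure_preimage_add_right,
    Real.volume_preimage_mul_left (by positivity), ENNReal.toReal_mul,
    ENNReal.toReal_ofReal (abs_nonneg _), abs_of_pos (by positivity), Measure.real,
    inv_mul_eq_div]

theorem volume_real_biUnion_compl_wordZoom_preimage_le (G : Finset (Fin n → Fin 3)) (X : Set ℝ) :
    volume.real (⋃ w ∈ Gᶜ, wordZoom t w ⁻¹' X) ≤ (1 - G.dens) * volume.real X := by
  have hcompl : (Gᶜ.card : ℝ) = 3 ^ n - G.card := by
    rw [Finset.card_compl, Nat.cast_sub G.card_le_univ]; simp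
  refine (measureReal_biUnion_finset_le _ _).trans_eq ?_
  simp only [volume_real_wordZoom_preimage, Finset.sum_const, nsmul_eq_mul, hcompl,
    Finset.nnratCast_dens, Fintype.card_fun, Fintype.card_fin]
  push_cast
  field_simp

theorem abs_wgt_le (ht : |t| ≤ 2) (i : Fin 3) : |wgt t i| ≤ 2 := by
  fin_cases i <;> simp [wgt, ht]

theorem abs_wordPoint_le (ht : |t| ≤ 2) (a : Fin n → Fin 3) :
    |wordPoint t a| ≤ 1 - (3 ^ n)⁻¹ := by
  induction n with
  | zero => simp [wordPoint]
  | succ n ih =>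
    have hlast : |wgt t (a (Fin.last n)) / 3 ^ (n + 1)| ≤ 2 / 3 ^ (n + 1) := by
      rw [abs_div, abs_of_pos (show (0 : ℝ) < 3 ^ (n + 1) by positivity)]
      gcongr
      exact abs_wgt_le ht _
    calc |wordPoint t a|
        = |wordPoint t (Fin.init a) + wgt t (a (Fin.last n)) / 3 ^ (n + 1)| := by
          rw [wordPoint, Fin.sum_univ_castSucc]; rfl
      _ ≤ (1 - (3 ^ n)⁻¹) + 2 / 3 ^ (n + 1) := (abs_add_le _ _).trans (add_le_add (ih _) hlast)
      _ = 1 - (3 ^ (n + 1))⁻¹ := by rw [pow_succ]; field_simp; ring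

theorem wordInterval_subset_closedBall (ht : |t| ≤ 2) (a : Fin n → Fin 3) :
    wordInterval t a ⊆ Metric.closedBall 0 1 :=
  Metric.closedBall_subset_closedBall' <| by
    rw [Real.dist_0_eq_abs]; linarith [abs_wordPoint_le ht a]

theorem wordInterval_subset_take (ht : |t| ≤ 2) (h : n ≤ N) (w : Fin N → Fin 3) :
    wordInterval t w ⊆ wordInterval t (Fin.take n h w) := by
  obtain ⟨m, rfl⟩ := Nat.exists_eq_add_of_le h
  obtain ⟨⟨a, b⟩, rfl⟩ := (Fin.appendEquiv n m).surjective w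
  intro x hx
  have hzoom := wordInterval_subset_closedBall ht b (mem_wordInterval_append.1 hx)
  rw [mem_closedBall_zero_iff, Real.norm_eq_abs] at hzoom
  rw [take_appendEquiv]
  exact mem_wordInterval_iff_abs_wordZoom_le.2 hzoom

theorem multSupport_antitone (ht : |t| ≤ 2) : Antitone (multSupport t) := by
  intro n N h s hs
  obtain ⟨w, hw⟩ := mem_multSupport.1 hs
  exact mem_multSupport.2 ⟨_, wordInterval_subset_take ht h w hw⟩

theorem wordZoom_preimage_multSupport_subset (ht : |t| ≤ 2) (a : Fin n → Fin 3) (m : ℕ) :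
    wordZoom t a ⁻¹' multSupport t m ⊆ wordInterval t a := by
  intro x hx
  have hball := multSupport_antitone ht m.zero_le hx
  rw [multSupport_zero, mem_closedBall_zero_iff, Real.norm_eq_abs] at hball
  exact mem_wordInterval_iff_abs_wordZoom_le.2 hball

theorem volume_multSupport_ne_top (ht : |t| ≤ 2) (n : ℕ) : volume (multSupport t n) ≠ ⊤ := by
  refine measure_ne_top_of_subset (multSupport_antitone ht n.zero_le) ?_
  rw [multSupport_zero]
  exact measure_closedBall_lt_top.ne

theorem dens_wordsNear (n : Fin (N + 1)) (s : ℝ) :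
    ((wordsNear t n s).dens : ℝ) = multFn t n s * (3 ^ (n : ℕ))⁻¹ := by
  classical
  rw [wordsNear, dens_filter_take n.is_le (fun a => s ∈ wordInterval t a), multFn_eq_card,
    Finset.nnratCast_dens, div_eq_mul_inv]
  simp

theorem wordInterval_subset_of_mem_wordsNear (ht : |t| ≤ 2) {n : Fin (N + 1)} {s : ℝ}
    {w : Fin N → Fin 3} (hw : w ∈ wordsNear t n s) :
    wordInterval t w ⊆ Metric.closedBall s (2 * (3 ^ (n : ℕ))⁻¹) := by
  classical
  have hs : s ∈ wordInterval t (Fin.take n n.is_le w) := by simpa [wordsNear] using hw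
  refine (wordInterval_subset_take ht n.is_le w).trans (Metric.closedBall_subset_closedBall' ?_)
  rw [dist_comm]
  linarith [Metric.mem_closedBall.1 hs]

theorem pairwiseDisjoint_wordsNear (ht : |t| ≤ 2) {u : Set ℝ} {n : ℝ → Fin (N + 1)}
    (hu : u.PairwiseDisjoint fun s => Metric.closedBall s (2 * (3 ^ (n s : ℕ))⁻¹)) :
    u.PairwiseDisjoint fun s => wordsNear t (n s) s := by
  intro s hs s' hs' hne
  refine Finset.disjoint_left.2 fun w hw hw' => ?_
  have hmem : wordPoint t w ∈ wordInterval t w := Metric.mem_closedBall_self (by positivity)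
  exact Set.disjoint_left.1 (hu hs hs' hne) (wordInterval_subset_of_mem_wordsNear ht hw hmem)
    (wordInterval_subset_of_mem_wordsNear ht hw' hmem)

theorem exists_finset_vitali_cover (ht : |t| ≤ 2) (N : ℕ) {K : ℝ} (hK : 0 < K) :
    ∃ (u : Finset ℝ) (n : ℝ → Fin (N + 1)), (∀ s ∈ u, K ≤ multFn t (n s) s) ∧
      ((u : Set ℝ).PairwiseDisjoint fun s => wordsNear t (n s) s) ∧
      {s | K ≤ multFnStar t N s} ⊆
        ⋃ s ∈ u, Metric.closedBall s (5 * (2 * (3 ^ (n s : ℕ))⁻¹)) := by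
  have hlevel : ∀ s ∈ {s | K ≤ multFnStar t N s}, ∃ n : Fin (N + 1), K ≤ multFn t n s :=
    fun s hs => exists_le_multFn_of_le_multFnStar hs
  choose! n hn using hlevel
  obtain ⟨u, hu_sub, hu_disj, hu_cover⟩ :=
    Vitali.exists_disjoint_subfamily_covering_enlargement_closedBall {s | K ≤ multFnStar t N s}
      (fun s => s) (fun s => 2 * (3 ^ (n s : ℕ))⁻¹) 2
      (fun s _ => mul_le_of_le_one_right two_pos.le
        (inv_le_one_of_one_le₀ (one_le_pow₀ (by norm_num)))) 5 (by norm_num)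
  have hdisj := pairwiseDisjoint_wordsNear ht hu_disj
  have hne : ∀ s ∈ u, (wordsNear t (n s) s).Nonempty := fun s hs => by
    have hmult : (0 : ℝ) < multFn t (n s) s := hK.trans_le (hn s (hu_sub hs))
    have hdens : (0 : ℝ) < (wordsNear t (n s) s).dens := by rw [dens_wordsNear]; positivity
    exact Finset.dens_pos.1 (by exact_mod_cast hdens)
  lift u to Finset ℝ using finite_of_pairwiseDisjoint_finset hdisj hne
  refine ⟨u, n, fun s hs => hn s (hu_sub hs), hdisj, fun s hs => ?_⟩
  obtain ⟨b, hb, hsub⟩ := hu_cover s hs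
  exact Set.mem_biUnion hb (hsub (Metric.mem_closedBall_self (by positivity)))

theorem exists_words_volume_le_dens (ht : |t| ≤ 2) (N : ℕ) {K : ℝ} (hK : 0 < K) :
    ∃ G : Finset (Fin N → Fin 3),
      volume {s | K ≤ multFnStar t N s} ≤ ENNReal.ofReal (20 / K * G.dens) ∧
      volume (⋃ w ∈ G, wordInterval t w) ≤ ENNReal.ofReal (4 / K * G.dens) := by
  classical
  obtain ⟨u, n, hmult, hdisj, hcover⟩ := exists_finset_vitali_cover ht N hK
  set Q : ℝ := ∑ s ∈ u, (3 ^ (n s : ℕ))⁻¹ with hQ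
  set G := u.biUnion fun s => wordsNear t (n s) s with hG
  have hQG : Q ≤ G.dens / K := by
    rw [le_div_iff₀' hK, hG, Finset.dens_biUnion hdisj, hQ, Finset.mul_sum, NNRat.cast_sum]
    refine Finset.sum_le_sum fun s hs => ?_
    rw [dens_wordsNear]
    exact mul_le_mul_of_nonneg_right (hmult s hs) (by positivity)
  have hG_cover : ⋃ w ∈ G, wordInterval t w ⊆
      ⋃ s ∈ u, Metric.closedBall s (2 * (3 ^ (n s : ℕ))⁻¹) := by
    refine Set.iUnion₂_subset fun w hw => ?_
    obtain ⟨s, hs, hws⟩ := Finset.mem_biUnion.1 hw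
    exact (wordInterval_subset_of_mem_wordsNear ht hws).trans
      (Set.subset_biUnion_of_mem (u := fun s => Metric.closedBall s (2 * (3 ^ (n s : ℕ))⁻¹)) hs)
  refine ⟨G, (measure_mono hcover).trans ?_, (measure_mono hG_cover).trans ?_⟩
  · refine (volume_biUnion_closedBall_le u _ fun s _ => by positivity).trans
      (ENNReal.ofReal_le_ofReal ?_)
    rw [← Finset.mul_sum, ← Finset.mul_sum, ← hQ, div_mul_eq_mul_div, mul_div_assoc]
    linarith
  · refine (volume_biUnion_closedBall_le u _ fun s _ => by positivity).trans
      (ENNReal.ofReal_le_ofReal ?_)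
    rw [← Finset.mul_sum, ← hQ, div_mul_eq_mul_div, mul_div_assoc]
    linarith

theorem volume_real_multSupport_add_le (ht : |t| ≤ 2) (G : Finset (Fin N → Fin 3)) (m : ℕ) :
    volume.real (multSupport t (N + m)) ≤
      volume.real (⋃ w ∈ G, wordInterval t w) + (1 - G.dens) * volume.real (multSupport t m) := by
  classical
  set near := ⋃ w ∈ G, wordInterval t w
  set far := ⋃ w ∈ Gᶜ, wordZoom t w ⁻¹' multSupport t m
  have hsplit : multSupport t (N + m) ⊆ near ∪ far := by
    rw [multSupport_add]
    refine Set.iUnion_subset fun w => ?_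
    by_cases hw : w ∈ G
    · exact ((wordZoom_preimage_multSupport_subset ht w m).trans
        (Set.subset_biUnion_of_mem (u := wordInterval t) hw)).trans Set.subset_union_left
    · exact (Set.subset_biUnion_of_mem (u := fun w => wordZoom t w ⁻¹' multSupport t m)
        (Finset.mem_compl.2 hw)).trans Set.subset_union_right
  have hbounded : near ∪ far ⊆ Metric.closedBall 0 1 :=
    Set.union_subset (Set.iUnion₂_subset fun w _ => wordInterval_subset_closedBall ht w)
      (Set.iUnion₂_subset fun w _ => (wordZoom_preimage_multSupport_subset ht w m).trans
        (wordInterval_subset_closedBall ht w))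
  have hfar : volume.real far ≤ (1 - G.dens) * volume.real (multSupport t m) :=
    volume_real_biUnion_compl_wordZoom_preimage_le G _
  calc volume.real (multSupport t (N + m))
      ≤ volume.real (near ∪ far) :=
        measureReal_mono hsplit (measure_ne_top_of_subset hbounded measure_closedBall_lt_top.ne)
    _ ≤ volume.real near + volume.real far := measureReal_union_le _ _
    _ ≤ volume.real near + (1 - G.dens) * volume.real (multSupport t m) := by gcongr

theorem exists_contraction_volume_multSupport (ht : |t| ≤ 2) (N : ℕ) {K : ℝ} (hK : 0 < K) :
    ∃ δ ∈ Set.Icc (0 : ℝ) 1,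
      volume {s | K ≤ multFnStar t N s} ≤ ENNReal.ofReal (20 / K * δ) ∧
      ∀ m, volume.real (multSupport t (N + m)) ≤
        4 / K * δ + (1 - δ) * volume.real (multSupport t m) := by
  obtain ⟨G, hE, hG⟩ := exists_words_volume_le_dens ht N hK
  refine ⟨G.dens, ⟨by positivity, by exact_mod_cast G.dens_le_one⟩, hE, fun m => ?_⟩
  refine (volume_real_multSupport_add_le ht G m).trans (add_le_add_left ?_ _)
  exact ENNReal.toReal_le_of_le_ofReal (by positivity) hG

end

theorem support_small_for_good_directions_general {t : ℝ} (ht : |t| ≤ 2) {N M : ℕ} (hN : 0 < N)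
    {K : ℝ} (hK : 0 < K) (hM : (N : ENNReal) ≤ M * volume {s : ℝ | K ≤ (multFnStar t N s : ℝ)}) :
    volume {s : ℝ | 1 ≤ multFn t M s} ≤ ENNReal.ofReal (44 / K) := by
  obtain ⟨δ, hδ, hE, hrec⟩ := exists_contraction_volume_multSupport ht N hK
  set l := M / N
  have hδ₀ : 0 ≤ δ := hδ.1
  have hmass : 1 ≤ (l + 1) * (20 / K * δ) :=
    one_le_div_add_one_mul hN (by positivity) (hM.trans (by gcongr))
  have hpow : (1 - δ) ^ l ≤ 20 / K := one_sub_pow_le hδ (by positivity) hmass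
  have hvol : volume.real (multSupport t (N * l)) ≤ 44 / K :=
    calc volume.real (multSupport t (N * l))
        ≤ 4 / K + (1 - δ) ^ l * (volume.real (multSupport t 0) - 4 / K) :=
          le_of_affine_recurrence (u := fun m => volume.real (multSupport t m)) hδ.2 hrec l
      _ ≤ 4 / K + (1 - δ) ^ l * 2 := by
        rw [multSupport_zero, Real.volume_real_closedBall zero_le_one, mul_one]
        have hpow₀ : 0 ≤ (1 - δ) ^ l := pow_nonneg (sub_nonneg.2 hδ.2) l
        have hfixed : 0 ≤ 4 / K := by positivity
        gcongr
        exact sub_le_self 2 hfixed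
      _ ≤ 4 / K + 20 / K * 2 := by gcongr
      _ = 44 / K := by ring
  calc volume (multSupport t M)
      ≤ volume (multSupport t (N * l)) :=
        measure_mono (multSupport_antitone ht (Nat.mul_div_le M N))
    _ = ENNReal.ofReal (volume.real (multSupport t (N * l))) :=
        (ofReal_measureReal (volume_multSupport_ne_top ht _)).symm
    _ ≤ ENNReal.ofReal (44 / K) := ENNReal.ofReal_le_ofReal hvol

/-- If the level set `{f_N^* ≥ K}` has measure greater than `K⁻³` (a "good"
direction), then the support of `f_{M,t}` for `M = ⌈N·K^β⌉` has measure at most `C/K`. -/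
theorem support_small_for_good_directions :
    ∃ C > (0:ℝ), ∀ N : ℕ, 1 ≤ N → ∀ K : ℝ, 2 ≤ K → ∀ β : ℝ, 3 ≤ β →
      ∀ t ∈ Set.Icc (0:ℝ) 1,
      ENNReal.ofReal ((K ^ 3)⁻¹) < volume {s : ℝ | K ≤ (multFnStar t N s : ℝ)} →
      volume {s : ℝ | 1 ≤ multFn t (⌈(N : ℝ) * K ^ β⌉₊) s} ≤ ENNReal.ofReal (C / K) := by
  refine ⟨44, by norm_num, fun N hN K hK β hβ t ht hE => ?_⟩
  have ht' : |t| ≤ 2 := abs_le.2 ⟨by linarith [ht.1], by linarith [ht.2]⟩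
  exact support_small_for_good_directions_general ht' hN (by linarith)
    (natCast_le_ceil_mul_rpow_mul (by linarith) (by exact_mod_cast hβ) hE.le)
end

section
/- There is an absolute constant c > 0 such that for every integer J ≥ 1, all real numbers α_1, …, α_J (not necessarily distinct), and every real T > 0, one has ∫_{-T}^{T} |∑_{j=1}^{J} e^{i α_j x}|^2 dx ≥ c · T · J. -/
open MeasureTheory

/-!
For a nonnegative `F`, averaging `F (u - v)` over the square `[0, T]²` gives at most
`T⁻¹ ∫_{-T}^{T} F`. (The distribution of `u - v` has density the Fejér kernel `(T - |x|) / T²`.)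
On the other hand, the average of `cos (β (u - v))` is nonnegative for every `β`, because it is
`|T⁻¹ ∫₀ᵀ e^{iβu} du|²`, and it equals `1` for `β = 0`. When `F` is the squared modulus of an
exponential sum with nonnegative coefficients, `F` is a nonnegative combination of such cosines, so
the diagonal terms alone bound the average from below.
-/

lemma integral_integral_comp_sub_le {F : ℝ → ℝ} {T : ℝ} (hT : 0 ≤ T) (hF : 0 ≤ F)
    (hint : IntervalIntegrable F volume (-T) T) :
    ∫ v in 0..T, ∫ u in 0..T, F (u - v) ≤ T * ∫ x in (-T)..T, F x := by
  have slice_le : ∀ v ∈ Set.uIoc 0 T, ‖∫ u in 0..T, F (u - v)‖ ≤ ∫ x in (-T)..T, F x := by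
    intro v hv
    rw [Set.uIoc_of_le hT] at hv
    rw [Real.norm_of_nonneg (intervalIntegral.integral_nonneg hT fun u _ => hF (u - v)),
      intervalIntegral.integral_comp_sub_right]
    exact intervalIntegral.integral_mono_interval (by linarith [hv.2]) (by linarith)
      (by linarith [hv.1]) (.of_forall hF) hint
  calc ∫ v in 0..T, ∫ u in 0..T, F (u - v)
      ≤ ‖∫ v in 0..T, ∫ u in 0..T, F (u - v)‖ := Real.le_norm_self _
    _ ≤ (∫ x in (-T)..T, F x) * |T - 0| :=
        intervalIntegral.norm_integral_le_of_norm_le_const slice_le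
    _ = T * ∫ x in (-T)..T, F x := by rw [sub_zero, abs_of_nonneg hT, mul_comm]

lemma integral_integral_cos_mul_sub (β a b : ℝ) :
    ∫ v in a..b, ∫ u in a..b, Real.cos (β * (u - v)) =
      (∫ u in a..b, Real.cos (β * u)) ^ 2 + (∫ u in a..b, Real.sin (β * u)) ^ 2 := by
  have slice_eq (v : ℝ) : ∫ u in a..b, Real.cos (β * (u - v)) =
      (∫ u in a..b, Real.cos (β * u)) * Real.cos (β * v) +
        (∫ u in a..b, Real.sin (β * u)) * Real.sin (β * v) := by
    simp_rw [mul_sub, Real.cos_sub]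
    rw [intervalIntegral.integral_add (Continuous.intervalIntegrable (by fun_prop) _ _)
        (Continuous.intervalIntegrable (by fun_prop) _ _),
      intervalIntegral.integral_mul_const, intervalIntegral.integral_mul_const]
  simp_rw [slice_eq]
  rw [intervalIntegral.integral_add (Continuous.intervalIntegrable (by fun_prop) _ _)
      (Continuous.intervalIntegrable (by fun_prop) _ _),
    intervalIntegral.integral_const_mul, intervalIntegral.integral_const_mul, sq, sq]

section

variable {ι : Type*} (s : Finset ι)

lemma integral_integral_sum_mul_cos (c β : ι → ℝ) (a b : ℝ) :
    ∫ v in a..b, ∫ u in a..b, ∑ i ∈ s, c i * Real.cos (β i * (u - v)) =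
      ∑ i ∈ s, c i * ∫ v in a..b, ∫ u in a..b, Real.cos (β i * (u - v)) := by
  have continuous_slice (i : ι) :
      Continuous fun v => ∫ u in a..b, Real.cos (β i * (u - v)) :=
    intervalIntegral.continuous_parametric_intervalIntegral_of_continuous' (by fun_prop) a b
  have slice_eq (v : ℝ) : ∫ u in a..b, ∑ i ∈ s, c i * Real.cos (β i * (u - v)) =
      ∑ i ∈ s, c i * ∫ u in a..b, Real.cos (β i * (u - v)) := by
    rw [intervalIntegral.integral_finsetSum fun i _ =>
      Continuous.intervalIntegrable (by fun_prop) a b]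
    simp_rw [intervalIntegral.integral_const_mul]
  simp_rw [slice_eq]
  rw [intervalIntegral.integral_finsetSum fun i _ =>
    ((continuous_slice i).const_mul (c i)).intervalIntegrable a b]
  simp_rw [intervalIntegral.integral_const_mul]

lemma sq_mul_sum_filter_le_integral_integral {c : ι → ℝ} (hc : ∀ i ∈ s, 0 ≤ c i)
    (β : ι → ℝ) (T : ℝ) :
    T ^ 2 * ∑ i ∈ s with β i = 0, c i ≤
      ∫ v in 0..T, ∫ u in 0..T, ∑ i ∈ s, c i * Real.cos (β i * (u - v)) := by
  rw [integral_integral_sum_mul_cos, Finset.sum_filter, Finset.mul_sum]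
  refine Finset.sum_le_sum fun i hi => ?_
  rw [integral_integral_cos_mul_sub]
  split_ifs with hβ
  · simp [hβ, mul_comm]
  · rw [mul_zero]
    exact mul_nonneg (hc i hi) (by positivity)

lemma mul_sum_filter_le_integral_sum_mul_cos {c : ι → ℝ} (hc : ∀ i ∈ s, 0 ≤ c i)
    {β : ι → ℝ} (hF : ∀ x, 0 ≤ ∑ i ∈ s, c i * Real.cos (β i * x)) {T : ℝ} (hT : 0 ≤ T) :
    T * ∑ i ∈ s with β i = 0, c i ≤
      ∫ x in (-T)..T, ∑ i ∈ s, c i * Real.cos (β i * x) := by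
  rcases hT.eq_or_lt with rfl | hT_pos
  · simp
  refine le_of_mul_le_mul_left ?_ hT_pos
  calc T * (T * ∑ i ∈ s with β i = 0, c i)
      = T ^ 2 * ∑ i ∈ s with β i = 0, c i := by ring
    _ ≤ ∫ v in 0..T, ∫ u in 0..T, ∑ i ∈ s, c i * Real.cos (β i * (u - v)) :=
        sq_mul_sum_filter_le_integral_integral s hc β T
    _ ≤ T * ∫ x in (-T)..T, ∑ i ∈ s, c i * Real.cos (β i * x) :=
        integral_integral_comp_sub_le hT hF (Continuous.intervalIntegrable (by fun_prop) _ _)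

lemma sq_norm_sum_mul_exp (a α : ι → ℝ) (x : ℝ) :
    ‖∑ j ∈ s, (a j : ℂ) * Complex.exp (Complex.I * (α j : ℂ) * (x : ℂ))‖ ^ 2 =
      ∑ p ∈ s ×ˢ s, a p.1 * a p.2 * Real.cos ((α p.1 - α p.2) * x) := by
  have exp_eq (j : ι) : Complex.exp (Complex.I * (α j : ℂ) * (x : ℂ)) =
      Complex.exp ((α j * x : ℝ) * Complex.I) := by
    push_cast
    ring_nf
  simp_rw [exp_eq]
  rw [Complex.sq_norm, Complex.normSq_apply, Complex.re_sum, Complex.im_sum]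
  simp_rw [Complex.re_ofReal_mul, Complex.im_ofReal_mul, Complex.exp_ofReal_mul_I_re,
    Complex.exp_ofReal_mul_I_im]
  rw [Finset.sum_mul_sum, Finset.sum_mul_sum, ← Finset.sum_product', ← Finset.sum_product',
    ← Finset.sum_add_distrib]
  refine Finset.sum_congr rfl fun p _ => ?_
  rw [sub_mul, Real.cos_sub]
  ring

theorem salem_lower_bound_general {a : ι → ℝ} (ha : ∀ j ∈ s, 0 ≤ a j) (α : ι → ℝ)
    {T : ℝ} (hT : 0 ≤ T) :
    T * ∑ j ∈ s, a j ^ 2 ≤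
      ∫ x in (-T)..T,
        ‖∑ j ∈ s, (a j : ℂ) * Complex.exp (Complex.I * (α j : ℂ) * (x : ℂ))‖ ^ 2 := by
  have coeff_nonneg : ∀ p ∈ s ×ˢ s, 0 ≤ a p.1 * a p.2 := fun p hp =>
    mul_nonneg (ha _ (Finset.mem_product.1 hp).1) (ha _ (Finset.mem_product.1 hp).2)
  have diag_subset : s.diag ⊆ {p ∈ s ×ˢ s | α p.1 - α p.2 = 0} := by
    intro p hp
    obtain ⟨hp_mem, hp_eq⟩ := Finset.mem_diag.1 hp
    simp [← hp_eq, hp_mem]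
  have diag_le : ∑ j ∈ s, a j ^ 2 ≤ ∑ p ∈ s ×ˢ s with α p.1 - α p.2 = 0, a p.1 * a p.2 := by
    simp_rw [sq]
    rw [← Finset.sum_diag s fun p => a p.1 * a p.2]
    exact Finset.sum_le_sum_of_subset_of_nonneg diag_subset fun p hp _ =>
      coeff_nonneg p (Finset.mem_filter.1 hp).1
  refine (mul_le_mul_of_nonneg_left diag_le hT).trans ?_
  simp_rw [sq_norm_sum_mul_exp]
  refine mul_sum_filter_le_integral_sum_mul_cos _ coeff_nonneg (fun x => ?_) hT
  rw [← sq_norm_sum_mul_exp]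
  positivity

end

/-- Salem's trick: `∫_{-T}^{T} |∑_j e^{iα_j x}|² dx ≥ c·T·J`. -/
theorem salem_lower_bound :
    ∃ c > (0:ℝ), ∀ J : ℕ, 1 ≤ J → ∀ α : Fin J → ℝ, ∀ T : ℝ, 0 < T →
      c * T * J ≤
        ∫ x in (-T)..T, ‖∑ j, Complex.exp (Complex.I * (α j : ℂ) * (x : ℂ))‖ ^ 2 := by
  refine ⟨1, one_pos, fun J _ α T hT => ?_⟩
  simpa using salem_lower_bound_general (a := 1) Finset.univ (by simp) α hT.le
end

section
/- There exists a constant H > 0 such that for every t ∈ [0,1] and every x ∈ ℝ there exists z ∈ ℂ with |z − x| ≤ H and |φ̃_t(z)| ≥ 1/2. -/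
/-- `φ̃_t(z) = 1 + e^{-itz} + e^{-iz}`. -/
noncomputable def phiTilde (t : ℝ) (z : ℂ) : ℂ :=
  1 + Complex.exp (-Complex.I * (t : ℂ) * z) + Complex.exp (-Complex.I * z)

/-! The middle term of `φ̃_t` is unimodular on the real line, so `‖φ̃_t(z)‖ ≥ ‖1 + e^{-iz}‖ - 1`
there. At `z ∈ 2πℤ` the right-hand side is `2 - 1 = 1`, and every real number is within `π` of
`2πℤ`. -/

theorem exists_int_abs_mul_sub_le {K : Type*} [Field K] [LinearOrder K] [IsStrictOrderedRing K]
    [FloorRing K] {p : K} (hp : 0 < p) (x : K) : ∃ n : ℤ, |n * p - x| ≤ p / 2 := by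
  refine ⟨round (x / p), ?_⟩
  have factor_out : round (x / p) * p - x = (round (x / p) - x / p) * p := by field_simp
  calc |round (x / p) * p - x| = |x / p - round (x / p)| * p := by
        rw [factor_out, abs_mul, abs_of_pos hp, abs_sub_comm]
    _ ≤ 1 / 2 * p := by gcongr; exact abs_sub_round _
    _ = p / 2 := by ring

theorem norm_one_add_exp_sub_one_le_norm_phiTilde (t z : ℝ) :
    ‖1 + Complex.exp (-Complex.I * z)‖ - 1 ≤ ‖phiTilde t z‖ := by
  have norm_middle : ‖Complex.exp (-Complex.I * t * z)‖ = 1 := by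
    simp [Complex.norm_exp]
  calc ‖1 + Complex.exp (-Complex.I * z)‖ - 1
      = ‖1 + Complex.exp (-Complex.I * z)‖ - ‖Complex.exp (-Complex.I * t * z)‖ := by
        rw [norm_middle]
    _ ≤ ‖1 + Complex.exp (-Complex.I * z) + Complex.exp (-Complex.I * t * z)‖ :=
        norm_sub_le_norm_add _ _
    _ = ‖phiTilde t z‖ := by rw [phiTilde, add_right_comm]

theorem one_le_norm_phiTilde_int_mul_two_pi (t : ℝ) (n : ℤ) :
    1 ≤ ‖phiTilde t (n * (2 * Real.pi) : ℝ)‖ := by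
  have exp_eq_one : Complex.exp (-Complex.I * (n * (2 * Real.pi) : ℝ)) = 1 :=
    Complex.exp_eq_one_iff.2 ⟨-n, by push_cast; ring⟩
  have lower_bound := norm_one_add_exp_sub_one_le_norm_phiTilde t (n * (2 * Real.pi))
  rw [exp_eq_one, one_add_one_eq_two, Complex.norm_ofNat] at lower_bound
  linarith

theorem phiTilde_not_small_nearby_general (t x : ℝ) :
    ∃ z : ℝ, |z - x| ≤ Real.pi ∧ 1 ≤ ‖phiTilde t z‖ := by
  obtain ⟨n, hn⟩ := exists_int_abs_mul_sub_le Real.two_pi_pos x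
  rw [mul_div_cancel_left₀ Real.pi two_ne_zero] at hn
  exact ⟨n * (2 * Real.pi), hn, one_le_norm_phiTilde_int_mul_two_pi t n⟩

/-- There is `H > 0` such that near any real point there is `z` with `|φ̃_t(z)| ≥ 1/2`. -/
theorem phiTilde_not_small_nearby :
    ∃ H > (0:ℝ), ∀ t ∈ Set.Icc (0:ℝ) 1, ∀ x : ℝ,
      ∃ z : ℂ, ‖z - (x : ℂ)‖ ≤ H ∧ 1 / 2 ≤ ‖phiTilde t z‖ := by
  refine ⟨Real.pi, Real.pi_pos, fun t _ x ↦ ?_⟩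
  obtain ⟨z, hzx, hz⟩ := phiTilde_not_small_nearby_general t x
  exact ⟨z, by rwa [← Complex.ofReal_sub, Complex.norm_real], one_half_lt_one.le.trans hz⟩
end

section
/- For every real t ∈ [0,1] there is no z ∈ ℂ satisfying simultaneously 1 + e^{-itz} + e^{-iz} = 0 and t·e^{-itz} + e^{-iz} = 0. (In other words, φ̃_t has no branch points for real t ∈ [0,1]: φ̃_t(z) and its z-derivative never vanish simultaneously.) -/
/-! Put `w = -iz`. At a branch point `e^{tw}` and `e^w` solve a linear system, namely
`(1 - t) e^{tw} = -1` and `(1 - t) e^w = t`. The logarithms of the moduli of both equations give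
two real linear equations in `Re w`, and eliminating `Re w` leaves
`t log |t| + (1 - t) log |1 - t| = 0`. This is the vanishing of the binary entropy of `t`, which
forces `t = 0` or `t = 1`; there the two original equations are inconsistent. -/

theorem log_norm_ofReal_mul_exp {c : ℝ} (hc : c ≠ 0) (w : ℂ) :
    Real.log ‖(c : ℂ) * Complex.exp w‖ = Real.log c + w.re := by
  rw [norm_mul, Complex.norm_real, Complex.norm_exp,
    Real.log_mul (norm_ne_zero_iff.2 hc) (Real.exp_ne_zero _), Real.log_exp,
    Real.norm_eq_abs, Real.log_abs]

-- `Real.log x` is `log |x|` for negative `x`, so `Real.binEntropy t` is the required expression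
-- for `t` outside `[0, 1]` as well.
theorem binEntropy_eq_zero_of_exp_add_exp {t : ℝ} {w : ℂ}
    (hzero : 1 + Complex.exp (t * w) + Complex.exp w = 0)
    (hcrit : t * Complex.exp (t * w) + Complex.exp w = 0) :
    Real.binEntropy t = 0 := by
  have hexp_mul : ((1 - t : ℝ) : ℂ) * Complex.exp (t * w) = -1 := by
    push_cast
    linear_combination hzero - hcrit
  have hexp : ((1 - t : ℝ) : ℂ) * Complex.exp w = t := by
    push_cast
    linear_combination hcrit - t * hzero
  have ht : 1 - t ≠ 0 := fun h ↦ by simp [h] at hexp_mul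
  have hlog_exp_mul : Real.log (1 - t) + t * w.re = 0 := by
    rw [← Complex.re_ofReal_mul, ← log_norm_ofReal_mul_exp ht, hexp_mul, norm_neg, norm_one,
      Real.log_one]
  have hlog_exp : Real.log (1 - t) + w.re = Real.log t := by
    rw [← log_norm_ofReal_mul_exp ht, hexp, Complex.norm_real, Real.norm_eq_abs, Real.log_abs]
  rw [Real.binEntropy, Real.log_inv, Real.log_inv]
  linear_combination t * hlog_exp - hlog_exp_mul

theorem phiTilde_no_real_branch_points_general (t : ℝ) :
    ¬ ∃ z : ℂ,
      1 + Complex.exp (-Complex.I * (t : ℂ) * z) + Complex.exp (-Complex.I * z) = 0 ∧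
      (t : ℂ) * Complex.exp (-Complex.I * (t : ℂ) * z) + Complex.exp (-Complex.I * z) = 0 := by
  rintro ⟨z, hzero, hcrit⟩
  have hexponent : -Complex.I * t * z = t * (-Complex.I * z) := by ring
  rw [hexponent] at hzero hcrit
  have hentropy : Real.binEntropy t = 0 := binEntropy_eq_zero_of_exp_add_exp hzero hcrit
  obtain rfl | rfl := Real.binEntropy_eq_zero.1 hentropy
  · simp at hcrit
  · simp only [Complex.ofReal_one, one_mul] at hzero hcrit
    exact one_ne_zero (α := ℂ) (by linear_combination hzero - hcrit)

/-- For real `t ∈ [0,1]`, `φ̃_t(z) = 1 + e^{-itz} + e^{-iz}` and its `z`-derivative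
(up to the factor `-i`, i.e. `t e^{-itz} + e^{-iz}`) never vanish simultaneously:
there are no branch points over real parameters. -/
theorem phiTilde_no_real_branch_points :
    ∀ t ∈ Set.Icc (0:ℝ) 1,
      ¬ ∃ z : ℂ,
        1 + Complex.exp (-Complex.I * (t : ℂ) * z) + Complex.exp (-Complex.I * z) = 0 ∧
        (t : ℂ) * Complex.exp (-Complex.I * (t : ℂ) * z) + Complex.exp (-Complex.I * z) = 0 :=
  fun t _ ↦ phiTilde_no_real_branch_points_general t
end

section
/- There is an absolute constant C > 0 such that for all integers a ≤ b and all real numbers x, x_0 with |x − x_0| ≤ 3^a, one has ∏_{k=a}^{b} (7 + 2cos(3^{-k} x_0)) ≤ C · ∏_{k=a}^{b} (7 + 2cos(3^{-k} x)). Equivalently, with r(x) := (7 + 2cos x)/9 and R(x) := ∏_{k=a}^{b} r(3^{-k} x), the values R(x) for x ranging over any interval of radius 3^a are comparable with an absolute comparability constant. -/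
/-!
A factor with Lipschitz constant `L` and values at least `m > 0` has a logarithm with Lipschitz
constant `K = L / m`, so moving from `x₀` to `x` in the factor of frequency `3 ^ (-k)` costs at most
`exp (K * 3 ^ (-k) * |x - x₀|)`. For `|x - x₀| ≤ 3 ^ a` and `a ≤ k` these exponents are dominated by
a geometric series, whose sum does not depend on `a` and `b`.
-/

open Finset Real
open scoped NNReal

lemma le_exp_mul_dist_mul_of_lipschitzWith {X : Type*} [PseudoMetricSpace X] {f : X → ℝ}
    {L : ℝ≥0} {m : ℝ} (hf : LipschitzWith L f) (hm : 0 < m) (x : X) {y : X} (hy : m ≤ f y) :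
    f x ≤ exp (L / m * dist x y) * f y := by
  calc
    f x ≤ f y + L * dist x y := hf.le_add_mul x y
    _ = L / m * dist x y * m + f y := by field_simp; ring
    _ ≤ L / m * dist x y * f y + f y := by gcongr
    _ = (L / m * dist x y + 1) * f y := by ring
    _ ≤ exp (L / m * dist x y) * f y := by
      gcongr
      · exact hm.le.trans hy
      · exact add_one_le_exp _

lemma prod_le_exp_sum_mul_prod_of_lipschitzWith {ι X : Type*} [PseudoMetricSpace X]
    {s : Finset ι} {f : ι → X → ℝ} {L : ι → ℝ≥0} {m : ι → ℝ}
    (hf : ∀ i ∈ s, LipschitzWith (L i) (f i)) (hm : ∀ i ∈ s, 0 < m i)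
    {x y : X} (hx : ∀ i ∈ s, 0 ≤ f i x) (hy : ∀ i ∈ s, m i ≤ f i y) :
    ∏ i ∈ s, f i x ≤ exp ((∑ i ∈ s, L i / m i) * dist x y) * ∏ i ∈ s, f i y := by
  rw [sum_mul, exp_sum, ← prod_mul_distrib]
  exact prod_le_prod hx fun i hi ↦
    le_exp_mul_dist_mul_of_lipschitzWith (hf i hi) (hm i hi) x (hy i hi)

lemma sum_Icc_zpow_neg_le {q : ℝ} (hq : 1 < q) (a b : ℤ) :
    ∑ k ∈ Icc a b, q ^ (-k) ≤ q ^ (-a) * (1 - q⁻¹)⁻¹ := by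
  have hq₀ : 0 < q := one_pos.trans hq
  have hinv₀ : 0 ≤ q⁻¹ := inv_nonneg.2 hq₀.le
  have hinv₁ : q⁻¹ < 1 := inv_lt_one_of_one_lt₀ hq
  have hterm (n : ℕ) : q ^ (-(a + n : ℤ)) = q ^ (-a) * q⁻¹ ^ n := by
    rw [neg_add, zpow_add₀ hq₀.ne', zpow_neg q n, zpow_natCast, inv_pow]
  calc
    ∑ k ∈ Icc a b, q ^ (-k) = q ^ (-a) * ∑ n ∈ range (b + 1 - a).toNat, q⁻¹ ^ n := by
      simp only [Int.Icc_eq_finset_map, sum_map, Function.Embedding.trans_apply,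
        Nat.castEmbedding_apply, addLeftEmbedding_apply, hterm, mul_sum]
    _ ≤ q ^ (-a) * ∑' n : ℕ, q⁻¹ ^ n := by
      gcongr
      exact (summable_geometric_of_lt_one hinv₀ hinv₁).sum_le_tsum _ fun n _ ↦ pow_nonneg hinv₀ n
    _ = q ^ (-a) * (1 - q⁻¹)⁻¹ := by rw [tsum_geometric_of_lt_one hinv₀ hinv₁]

lemma lipschitzWith_const_add_mul_cos (c d : ℝ) : LipschitzWith ‖d‖₊ fun x ↦ c + d * cos x := by
  simpa using (LipschitzWith.const c).add ((lipschitzWith_smul d).comp lipschitzWith_cos)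

lemma sub_abs_le_const_add_mul_cos (c d x : ℝ) : c - |d| ≤ c + d * cos x := by
  have hcos : |d * cos x| ≤ |d| := by
    simpa [abs_mul] using mul_le_mul_of_nonneg_left (abs_cos_le_one x) (abs_nonneg d)
  linarith [neg_le_of_abs_le hcos]

theorem riesz_product_comparable_general {E : Type*} [SeminormedAddCommGroup E] [NormedSpace ℝ E]
    {r : E → ℝ} {L : ℝ≥0} {m q : ℝ} (hr : LipschitzWith L r) (hm : 0 < m) (hmr : ∀ x, m ≤ r x)
    (hq : 1 < q) {a : ℤ} (b : ℤ) {x x₀ : E} (hx : ‖x - x₀‖ ≤ q ^ a) :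
    ∏ k ∈ Icc a b, r (q ^ (-k) • x₀) ≤
      exp (L / m * (1 - q⁻¹)⁻¹) * ∏ k ∈ Icc a b, r (q ^ (-k) • x) := by
  have hq₀ : 0 < q := one_pos.trans hq
  have hgap : 0 < 1 - q⁻¹ := sub_pos.2 (inv_lt_one_of_one_lt₀ hq)
  have hpos (y : E) : 0 < r y := hm.trans_le (hmr y)
  have hlip (k : ℤ) : LipschitzWith (L * ‖q ^ (-k)‖₊) fun y : E ↦ r (q ^ (-k) • y) :=
    hr.comp (lipschitzWith_smul _)
  have hdist : dist x₀ x ≤ q ^ a := by rwa [dist_comm, dist_eq_norm]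
  have hexponent : (∑ k ∈ Icc a b, (L * ‖q ^ (-k)‖₊ : ℝ≥0) / m) * dist x₀ x ≤
      L / m * (1 - q⁻¹)⁻¹ := by
    calc
      (∑ k ∈ Icc a b, (L * ‖q ^ (-k)‖₊ : ℝ≥0) / m) * dist x₀ x
          = L / m * (∑ k ∈ Icc a b, q ^ (-k)) * dist x₀ x := by
        simp [mul_sum, abs_of_pos hq₀, mul_div_right_comm]
      _ ≤ L / m * (q ^ (-a) * (1 - q⁻¹)⁻¹) * q ^ a := by
        gcongr
        exact sum_Icc_zpow_neg_le hq a b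
      _ = L / m * (1 - q⁻¹)⁻¹ := by rw [zpow_neg]; field_simp
  calc
    ∏ k ∈ Icc a b, r (q ^ (-k) • x₀)
        ≤ exp ((∑ k ∈ Icc a b, (L * ‖q ^ (-k)‖₊ : ℝ≥0) / m) * dist x₀ x) *
          ∏ k ∈ Icc a b, r (q ^ (-k) • x) :=
      prod_le_exp_sum_mul_prod_of_lipschitzWith (fun k _ ↦ hlip k) (fun _ _ ↦ hm)
        (fun _ _ ↦ (hpos _).le) fun _ _ ↦ hmr _
    _ ≤ exp (L / m * (1 - q⁻¹)⁻¹) * ∏ k ∈ Icc a b, r (q ^ (-k) • x) := by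
      gcongr
      exact prod_nonneg fun _ _ ↦ (hpos _).le

/-- Uniform comparability of the Riesz products
`∏_{k=a}^{b} (7 + 2cos(3^{-k}·))` over intervals of radius `3^a`. -/
theorem riesz_product_comparable :
    ∃ C > (0:ℝ), ∀ a b : ℤ, a ≤ b → ∀ x x₀ : ℝ, |x - x₀| ≤ (3:ℝ) ^ a →
      ∏ k ∈ Finset.Icc a b, (7 + 2 * Real.cos ((3:ℝ) ^ (-k) * x₀)) ≤
        C * ∏ k ∈ Finset.Icc a b, (7 + 2 * Real.cos ((3:ℝ) ^ (-k) * x)) :=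
  ⟨_, exp_pos _, fun _ b _ _ _ hx ↦ riesz_product_comparable_general
    (lipschitzWith_const_add_mul_cos 7 2) (by norm_num) (sub_abs_le_const_add_mul_cos 7 2)
    (by norm_num) b hx⟩
end

section
/- There exists an absolute constant δ > 0 such that for every t ∈ [0,1] and every integer m ≥ 0 the following hold, where φ̃_k(z) := 1 + e^{-i 3^{-k} z} + e^{-i t 3^{-k} z} for 0 ≤ k ≤ m: (i) for every z ∈ ℂ with |Im z| ≤ δ there exists k_0 ∈ {0,1,…,m} such that ∏_{0 ≤ k ≤ m, k ≠ k_0} |φ̃_k(z)| ≥ 3^{-m}; (ii) for every x_0 ∈ ℝ, there is at most one index k_0 ∈ {0,1,…,m} for which there exists a point z_0 in the rectangle [x_0 − δ, x_0 + δ] × [−δ, δ] ⊆ ℂ with |φ̃_{k_0}(z_0)| < 3^{-m} (uniqueness of the critical index). -/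
/-- `φ̃_k(z) = 1 + e^{-i 3^{-k} z} + e^{-i t 3^{-k} z}`. -/
noncomputable def phiTildeK (t : ℝ) (k : ℕ) (z : ℂ) : ℂ :=
  1 + Complex.exp (-Complex.I * (3 : ℂ) ^ (-(k : ℤ)) * z)
    + Complex.exp (-Complex.I * (t : ℂ) * (3 : ℂ) ^ (-(k : ℤ)) * z)

/-!
Write `φ_k` for `phiTildeK t k`. On the real axis `φ_k = 1 + a + b` with `a`, `b` on the unit
circle, and lowering the index by `j` replaces `a`, `b` by their `3 ^ j`-th powers. If
`s = ‖1 + a + b‖` is small, then `1 + a ^ 3 + b ^ 3` is `3ab` up to `O(s ^ 2)`, because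
`a + b + ab = ab * conj (1 + a + b)` is small too. The defect `9 - ‖1 + a + b‖ ^ 2` is the sum of
the squared mutual distances of `1`, `a`, `b`, so raising to the `n`-th power multiplies it by at
most `n ^ 2`. Hence `‖φ_{i + j}‖ ≲ 3 ^ (-j)` with `j ≥ 1` forces `‖φ_i‖ ≥ 2` on the axis, and
`‖φ_i‖ ≥ 1` nearby.

So two different factors cannot both be below `3 ^ (-m)`. For the product, cut `{0, …, m}` from the
top into blocks `[a, a + d]` whose product is at least `3 ^ (-(d + 1))`: either the top factor
exceeds `1` and `d = 0`, or it lies in `(3 ^ (-(d + 1)), 3 ^ (-d)]` and the `d` factors below it are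
at least `1`. If this stops at an index `k` with `‖φ_k‖ ≤ 3 ^ (-k)`, omit that `k`: all lower
factors are at least `1`. Otherwise the lowest block starts at `0`; omit its smallest factor.
Either that factor is at most `1 / 3`, and the product gains a factor `3`, or the remaining ones are
all at least `1 / 3`.
-/

section UnitCircle

lemma norm_pow_sub_pow_le {A : Type*} [SeminormedRing A] [NormOneClass A] {x y : A}
    (hx : ‖x‖ ≤ 1) (hy : ‖y‖ ≤ 1) (n : ℕ) : ‖x ^ n - y ^ n‖ ≤ n * ‖x - y‖ := by
  induction n with
  | zero => simp
  | succ n ih =>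
    have hxn : ‖x ^ n‖ ≤ 1 := (norm_pow_le x n).trans (pow_le_one₀ (norm_nonneg x) hx)
    calc ‖x ^ (n + 1) - y ^ (n + 1)‖ = ‖x ^ n * (x - y) + (x ^ n - y ^ n) * y‖ := by
          congr 1; rw [pow_succ, pow_succ]; noncomm_ring
      _ ≤ ‖x ^ n‖ * ‖x - y‖ + ‖x ^ n - y ^ n‖ * ‖y‖ :=
          (norm_add_le _ _).trans (add_le_add (norm_mul_le _ _) (norm_mul_le _ _))
      _ ≤ 1 * ‖x - y‖ + (n * ‖x - y‖) * 1 := by gcongr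
      _ = (n + 1 : ℕ) * ‖x - y‖ := by push_cast; ring

lemma norm_add_add_sq_add_norm_sub_sq {E : Type*} [SeminormedAddCommGroup E]
    [InnerProductSpace ℝ E] (x y z : E) :
    ‖x + y + z‖ ^ 2 + (‖x - y‖ ^ 2 + ‖y - z‖ ^ 2 + ‖x - z‖ ^ 2) =
      3 * (‖x‖ ^ 2 + ‖y‖ ^ 2 + ‖z‖ ^ 2) := by
  simp only [norm_add_sq_real, norm_sub_sq_real, inner_add_left]
  ring

variable {a b : ℂ}

lemma nine_sub_norm_one_add_add_sq (ha : ‖a‖ = 1) (hb : ‖b‖ = 1) :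
    9 - ‖1 + a + b‖ ^ 2 = ‖1 - a‖ ^ 2 + ‖a - b‖ ^ 2 + ‖1 - b‖ ^ 2 := by
  have h := norm_add_add_sq_add_norm_sub_sq 1 a b
  rw [ha, hb, norm_one] at h
  linarith

lemma nine_sub_norm_one_add_pow_add_pow_sq_le (ha : ‖a‖ = 1) (hb : ‖b‖ = 1) (n : ℕ) :
    9 - ‖1 + a ^ n + b ^ n‖ ^ 2 ≤ n ^ 2 * (9 - ‖1 + a + b‖ ^ 2) := by
  have sq_le {u v : ℂ} (hu : ‖u‖ = 1) (hv : ‖v‖ = 1) :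
      ‖u ^ n - v ^ n‖ ^ 2 ≤ n ^ 2 * ‖u - v‖ ^ 2 := by
    rw [← mul_pow]
    gcongr
    exact norm_pow_sub_pow_le hu.le hv.le n
  have h1a := sq_le norm_one ha
  have h1b := sq_le norm_one hb
  rw [one_pow] at h1a h1b
  rw [nine_sub_norm_one_add_add_sq ha hb,
    nine_sub_norm_one_add_add_sq (by simp [ha]) (by simp [hb])]
  linarith [sq_le ha hb]

lemma norm_add_add_mul_eq_norm_one_add_add (ha : ‖a‖ = 1) (hb : ‖b‖ = 1) :
    ‖a + b + a * b‖ = ‖1 + a + b‖ := by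
  have haa : a * (starRingEnd ℂ) a = 1 := by simp [Complex.mul_conj', ha]
  have hbb : b * (starRingEnd ℂ) b = 1 := by simp [Complex.mul_conj', hb]
  have hconj : a + b + a * b = a * b * (starRingEnd ℂ) (1 + a + b) := by
    simp only [map_add, map_one]
    linear_combination (-b) * haa - a * hbb
  rw [hconj, norm_mul, norm_mul, Complex.norm_conj, ha, hb, one_mul, one_mul]

lemma nine_sub_norm_one_add_cube_add_cube_sq_le (ha : ‖a‖ = 1) (hb : ‖b‖ = 1) :
    9 - ‖1 + a ^ 3 + b ^ 3‖ ^ 2 ≤ 36 * ‖1 + a + b‖ ^ 2 := by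
  set s := 1 + a + b with hs
  set p := 1 + a ^ 3 + b ^ 3 with hp
  -- Newton's identity for the third power sum of `1`, `a`, `b`
  have newton : 3 * (a * b) = p - s * (s ^ 2 - 3 * (a + b + a * b)) := by rw [hs, hp]; ring
  have hs3 : ‖s‖ ≤ 3 := by
    refine norm_add₃_le.trans ?_
    rw [norm_one, ha, hb]; norm_num
  have hquad : ‖s ^ 2 - 3 * (a + b + a * b)‖ ≤ 6 * ‖s‖ := by
    calc ‖s ^ 2 - 3 * (a + b + a * b)‖ ≤ ‖s‖ ^ 2 + 3 * ‖s‖ := by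
          refine (norm_sub_le _ _).trans_eq ?_
          rw [norm_pow, norm_mul, norm_add_add_mul_eq_norm_one_add_add ha hb, Complex.norm_ofNat]
      _ ≤ 6 * ‖s‖ := by nlinarith [norm_nonneg s]
  have hp3 : 3 ≤ ‖p‖ + 6 * ‖s‖ ^ 2 := by
    calc (3 : ℝ) = ‖p - s * (s ^ 2 - 3 * (a + b + a * b))‖ := by rw [← newton]; simp [ha, hb]
      _ ≤ ‖p‖ + ‖s‖ * ‖s ^ 2 - 3 * (a + b + a * b)‖ :=
          (norm_sub_le _ _).trans_eq (by rw [norm_mul])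
      _ ≤ ‖p‖ + ‖s‖ * (6 * ‖s‖) := by gcongr
      _ = ‖p‖ + 6 * ‖s‖ ^ 2 := by ring
  linarith [sq_nonneg (‖p‖ - 3)]

lemma nine_sub_norm_one_add_pow_three_mul_sq_le (ha : ‖a‖ = 1) (hb : ‖b‖ = 1) (n : ℕ) :
    9 - ‖1 + a ^ (3 * n) + b ^ (3 * n)‖ ^ 2 ≤ 4 * (3 * n * ‖1 + a + b‖) ^ 2 := by
  rw [pow_mul, pow_mul]
  calc 9 - ‖1 + (a ^ 3) ^ n + (b ^ 3) ^ n‖ ^ 2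
      ≤ n ^ 2 * (9 - ‖1 + a ^ 3 + b ^ 3‖ ^ 2) :=
        nine_sub_norm_one_add_pow_add_pow_sq_le (by simp [ha]) (by simp [hb]) n
    _ ≤ n ^ 2 * (36 * ‖1 + a + b‖ ^ 2) := by
        gcongr
        exact nine_sub_norm_one_add_cube_add_cube_sq_le ha hb
    _ = 4 * (3 * n * ‖1 + a + b‖) ^ 2 := by ring

lemma two_le_norm_one_add_pow_three_mul (ha : ‖a‖ = 1) (hb : ‖b‖ = 1) {n : ℕ}
    (h : 3 * n * ‖1 + a + b‖ ≤ 1.1) : 2 ≤ ‖1 + a ^ (3 * n) + b ^ (3 * n)‖ := by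
  have hsq : (3 * n * ‖1 + a + b‖) ^ 2 ≤ 1.1 ^ 2 := by gcongr
  refine le_of_sq_le_sq ?_ (norm_nonneg _)
  linarith [nine_sub_norm_one_add_pow_three_mul_sq_le ha hb n]

end UnitCircle

section PlaneWave

/-- The plane wave `z ↦ e^{-icz}` of frequency `c`; `phiTildeK t k` is `1` plus the plane waves of
frequencies `3^{-k}` and `t 3^{-k}`. -/
noncomputable def planeWave (c : ℝ) (z : ℂ) : ℂ :=
  Complex.exp (-Complex.I * c * z)

lemma norm_planeWave_ofReal (c x : ℝ) : ‖planeWave c x‖ = 1 := by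
  rw [planeWave, show -Complex.I * c * x = ((-(c * x) : ℝ) : ℂ) * Complex.I by push_cast; ring]
  exact Complex.norm_exp_ofReal_mul_I _

lemma planeWave_natCast_mul (n : ℕ) (c : ℝ) (z : ℂ) :
    planeWave (n * c) z = planeWave c z ^ n := by
  rw [planeWave, planeWave, ← Complex.exp_nat_mul]
  congr 1
  push_cast
  ring

lemma planeWave_add (c : ℝ) (z w : ℂ) : planeWave c (z + w) = planeWave c z * planeWave c w := by
  rw [planeWave, mul_add, Complex.exp_add, planeWave, planeWave]

lemma norm_planeWave_sub_planeWave_ofReal_le {c x : ℝ} {z : ℂ} (h : |c| * ‖z - x‖ ≤ 1) :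
    ‖planeWave c z - planeWave c x‖ ≤ 2 * (|c| * ‖z - x‖) := by
  have hexp : ‖-Complex.I * c * (z - x)‖ = |c| * ‖z - x‖ := by simp
  calc ‖planeWave c z - planeWave c x‖ = ‖planeWave c x * (planeWave c (z - x) - 1)‖ := by
        rw [mul_sub, ← planeWave_add, add_sub_cancel, mul_one]
    _ = ‖planeWave c (z - x) - 1‖ := by rw [norm_mul, norm_planeWave_ofReal, one_mul]
    _ ≤ 2 * ‖-Complex.I * c * (z - x)‖ := Complex.norm_exp_sub_one_le (hexp.trans_le h)
    _ = 2 * (|c| * ‖z - x‖) := by rw [hexp]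

end PlaneWave

section PhiTilde

variable {t x : ℝ} {i j k : ℕ} {z w : ℂ}

lemma phiTildeK_eq_one_add_planeWave (t : ℝ) (k : ℕ) (z : ℂ) :
    phiTildeK t k z = 1 + planeWave (3⁻¹ ^ k) z + planeWave (t * 3⁻¹ ^ k) z := by
  simp [phiTildeK, planeWave, mul_assoc]

lemma phiTildeK_eq_one_add_planeWave_pow (t : ℝ) (i j : ℕ) (z : ℂ) :
    phiTildeK t i z = 1 + planeWave (3⁻¹ ^ (i + j)) z ^ 3 ^ j
      + planeWave (t * 3⁻¹ ^ (i + j)) z ^ 3 ^ j := by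
  have hfreq : ((3 ^ j : ℕ) : ℝ) * 3⁻¹ ^ (i + j) = 3⁻¹ ^ i := by
    push_cast
    rw [pow_add, mul_left_comm, ← mul_pow]
    norm_num
  rw [phiTildeK_eq_one_add_planeWave, ← planeWave_natCast_mul, ← planeWave_natCast_mul,
    mul_left_comm, hfreq]

lemma two_le_norm_phiTildeK_ofReal (hj : 0 < j) (h : 3 ^ j * ‖phiTildeK t (i + j) x‖ ≤ 1.1) :
    2 ≤ ‖phiTildeK t i x‖ := by
  obtain ⟨l, rfl⟩ := Nat.exists_eq_succ_of_ne_zero hj.ne'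
  rw [phiTildeK_eq_one_add_planeWave, pow_succ'] at h
  rw [phiTildeK_eq_one_add_planeWave_pow t i l.succ, pow_succ']
  exact two_le_norm_one_add_pow_three_mul (norm_planeWave_ofReal _ _) (norm_planeWave_ofReal _ _)
    (by exact_mod_cast h)

lemma norm_phiTildeK_sub_phiTildeK_ofReal_le (h : (1 + |t|) * ‖z - x‖ ≤ 1 / 20) (k : ℕ) :
    ‖phiTildeK t k z - phiTildeK t k x‖ ≤ 1 / 10 * 3⁻¹ ^ k := by
  set c : ℝ := 3⁻¹ ^ k
  have hc0 : 0 < c := by positivity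
  have hc1 : c ≤ 1 := pow_le_one₀ (by norm_num) (by norm_num)
  have hscaled : c * ‖z - x‖ + |t| * c * ‖z - x‖ ≤ 1 / 20 * c := by nlinarith
  have hfst : 0 ≤ c * ‖z - x‖ := by positivity
  have hsnd : 0 ≤ |t| * c * ‖z - x‖ := by positivity
  have h₁ := norm_planeWave_sub_planeWave_ofReal_le (c := c) (x := x) (z := z)
    (by rw [abs_of_pos hc0]; linarith)
  have h₂ := norm_planeWave_sub_planeWave_ofReal_le (c := t * c) (x := x) (z := z)
    (by rw [abs_mul, abs_of_pos hc0]; linarith)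
  rw [abs_of_pos hc0] at h₁
  rw [abs_mul, abs_of_pos hc0] at h₂
  calc ‖phiTildeK t k z - phiTildeK t k x‖
      = ‖(planeWave c z - planeWave c x) + (planeWave (t * c) z - planeWave (t * c) x)‖ := by
        rw [phiTildeK_eq_one_add_planeWave, phiTildeK_eq_one_add_planeWave]
        congr 1; ring
    _ ≤ ‖planeWave c z - planeWave c x‖ + ‖planeWave (t * c) z - planeWave (t * c) x‖ :=
        norm_add_le _ _
    _ ≤ 1 / 10 * c := by linarith

lemma one_le_norm_phiTildeK (hz : (1 + |t|) * ‖z - x‖ ≤ 1 / 20)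
    (hw : (1 + |t|) * ‖w - x‖ ≤ 1 / 20) (hj : 0 < j)
    (h : ‖phiTildeK t (i + j) z‖ ≤ 3⁻¹ ^ j) : 1 ≤ ‖phiTildeK t i w‖ := by
  have hpow {p q : ℕ} (hpq : p ≤ q) : (3⁻¹ : ℝ) ^ q ≤ 3⁻¹ ^ p :=
    pow_le_pow_of_le_one (by norm_num) (by norm_num) hpq
  have hupper : ‖phiTildeK t (i + j) x‖ ≤ 1.1 * 3⁻¹ ^ j := by
    linarith [norm_le_norm_add_norm_sub (phiTildeK t (i + j) z) (phiTildeK t (i + j) x),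
      norm_phiTildeK_sub_phiTildeK_ofReal_le hz (i + j), hpow (Nat.le_add_left j i)]
  have hreal : 2 ≤ ‖phiTildeK t i x‖ := two_le_norm_phiTildeK_ofReal hj <|
    calc 3 ^ j * ‖phiTildeK t (i + j) x‖ ≤ 3 ^ j * (1.1 * 3⁻¹ ^ j) := by gcongr
      _ = 1.1 := by rw [inv_pow]; field_simp
  linarith [norm_le_norm_add_norm_sub (phiTildeK t i w) (phiTildeK t i x),
    norm_phiTildeK_sub_phiTildeK_ofReal_le hw i, hpow (Nat.zero_le i)]

lemma le_of_norm_phiTildeK_lt {m : ℕ} (hz : (1 + |t|) * ‖z - x‖ ≤ 1 / 20)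
    (hw : (1 + |t|) * ‖w - x‖ ≤ 1 / 20) (hk : k ≤ m) (hkz : ‖phiTildeK t k z‖ < 3⁻¹ ^ m)
    (hiw : ‖phiTildeK t i w‖ < 3⁻¹ ^ m) : k ≤ i := by
  by_contra! hik
  obtain ⟨j, rfl⟩ := Nat.exists_eq_add_of_lt hik
  have hsmall : ‖phiTildeK t (i + (j + 1)) z‖ ≤ 3⁻¹ ^ (j + 1) :=
    hkz.le.trans (pow_le_pow_of_le_one (by norm_num) (by norm_num) (by omega))
  have hm : (3⁻¹ : ℝ) ^ m ≤ 1 := pow_le_one₀ (by norm_num) (by norm_num)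
  exact (hiw.trans_le hm).not_ge (one_le_norm_phiTildeK hz hw j.succ_pos hsmall)

end PhiTilde

section Tiling

variable {R : Type*} [CommSemiring R] [LinearOrder R] [IsStrictOrderedRing R] {r : R} {m : ℕ}

lemma exists_pow_le_prod_erase_of_pow_succ_le_prod {ι : Type*} [DecidableEq ι] {s : Finset ι}
    {f : ι → R} (hr : 0 < r) (hf : ∀ k ∈ s, 0 ≤ f k) (hs : s.card = m + 1)
    (h : r ^ (m + 1) ≤ ∏ k ∈ s, f k) : ∃ k₀ ∈ s, r ^ m ≤ ∏ k ∈ s.erase k₀, f k := by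
  obtain ⟨k₀, hk₀, hmin⟩ := s.exists_min_image f (Finset.card_pos.1 (by omega))
  refine ⟨k₀, hk₀, ?_⟩
  rcases le_total (f k₀) r with hle | hge
  · have hP : 0 ≤ ∏ k ∈ s.erase k₀, f k :=
      Finset.prod_nonneg fun k hk => hf k (Finset.mem_of_mem_erase hk)
    refine le_of_mul_le_mul_left ?_ hr
    calc r * r ^ m = r ^ (m + 1) := (pow_succ' r m).symm
      _ ≤ f k₀ * ∏ k ∈ s.erase k₀, f k := by rwa [Finset.mul_prod_erase s f hk₀]
      _ ≤ r * ∏ k ∈ s.erase k₀, f k := by gcongr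
  · calc r ^ m = ∏ _k ∈ s.erase k₀, r := by simp [Finset.card_erase_of_mem hk₀, hs]
      _ ≤ ∏ k ∈ s.erase k₀, f k := Finset.prod_le_prod (fun _ _ => hr.le)
          fun k hk => hge.trans (hmin k (Finset.mem_of_mem_erase hk))

lemma prod_erase_range_mul_prod_Ico {M : Type*} [CommMonoid M] (f : ℕ → M) {k₀ a n : ℕ}
    (hk₀ : k₀ < a) (han : a ≤ n) :
    (∏ k ∈ (Finset.range a).erase k₀, f k) * ∏ k ∈ Finset.Ico a n, f k =
      ∏ k ∈ (Finset.range n).erase k₀, f k := by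
  have hdisj : Disjoint ((Finset.range a).erase k₀) (Finset.Ico a n) := by
    refine Finset.disjoint_left.2 fun i hi hi' => ?_
    simp only [Finset.mem_erase, Finset.mem_range, Finset.mem_Ico] at hi hi'
    omega
  rw [← Finset.prod_union hdisj]
  congr 1
  ext i
  simp only [Finset.mem_erase, Finset.mem_range, Finset.mem_union, Finset.mem_Ico]
  omega

variable {f : ℕ → R}

lemma one_le_prod_Ico_of_le_pow (hr0 : 0 ≤ r) (hr1 : r ≤ 1)
    (h : ∀ i j, 0 < j → f (i + j) ≤ r ^ j → 1 ≤ f i) {a d : ℕ} (hm : f m ≤ r ^ d)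
    (had : m ≤ a + d) : 1 ≤ ∏ k ∈ Finset.Ico a m, f k := by
  refine Finset.one_le_prod fun i hi => ?_
  obtain ⟨hai, him⟩ := Finset.mem_Ico.1 hi
  refine h i (m - i) (by omega) ?_
  rw [Nat.add_sub_cancel' him.le]
  exact hm.trans (pow_le_pow_of_le_one hr0 hr1 (by omega))

lemma exists_pow_succ_le_prod_Ico (hr0 : 0 ≤ r) (hr1 : r ≤ 1)
    (h : ∀ i j, 0 < j → f (i + j) ≤ r ^ j → 1 ≤ f i) (hm : r ^ m < f m) :
    ∃ a d, a + d = m ∧ r ^ (d + 1) ≤ ∏ k ∈ Finset.Ico a (m + 1), f k := by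
  classical
  have hex : ∃ e, r ^ e < f m := ⟨m, hm⟩
  obtain ⟨e, he⟩ : ∃ e, Nat.find hex = e := ⟨_, rfl⟩
  have hlt : r ^ e < f m := he ▸ Nat.find_spec hex
  have hem : e ≤ m := he ▸ Nat.find_min' hex hm
  cases e with
  | zero =>
    refine ⟨m, 0, rfl, ?_⟩
    rw [pow_zero] at hlt
    simpa using hr1.trans hlt.le
  | succ d =>
    have hle : f m ≤ r ^ d := not_lt.1 (Nat.find_min hex (by omega))
    refine ⟨m - d, d, by omega, ?_⟩
    rw [Finset.prod_Ico_succ_top (by omega)]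
    exact hlt.le.trans (le_mul_of_one_le_left ((pow_nonneg hr0 _).trans hlt.le)
      (one_le_prod_Ico_of_le_pow hr0 hr1 h hle (by omega)))

lemma exists_pow_le_prod_erase_range (hr0 : 0 < r) (hr1 : r ≤ 1) (hf : ∀ k, 0 ≤ f k)
    (h : ∀ i j, 0 < j → f (i + j) ≤ r ^ j → 1 ≤ f i) (m : ℕ) :
    ∃ k₀ ≤ m, r ^ m ≤ ∏ k ∈ (Finset.range (m + 1)).erase k₀, f k := by
  induction m using Nat.strong_induction_on with
  | _ m ih =>
  rcases le_or_gt (f m) (r ^ m) with hsmall | hlarge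
  · refine ⟨m, le_rfl, (pow_le_one₀ hr0.le hr1).trans ?_⟩
    rw [Finset.range_add_one, Finset.erase_insert Finset.notMem_range_self,
      ← Nat.Ico_zero_eq_range]
    exact one_le_prod_Ico_of_le_pow hr0.le hr1 h hsmall (Nat.zero_add m).ge
  obtain ⟨a, d, rfl, hblock⟩ := exists_pow_succ_le_prod_Ico hr0.le hr1 h hlarge
  cases a with
  | zero =>
    rw [zero_add, Nat.Ico_zero_eq_range] at hblock
    obtain ⟨k₀, hk₀, hprod⟩ := exists_pow_le_prod_erase_of_pow_succ_le_prod hr0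
      (fun k _ => hf k) (Finset.card_range (d + 1)) hblock
    rw [zero_add]
    exact ⟨k₀, Finset.mem_range_succ_iff.1 hk₀, hprod⟩
  | succ a =>
    obtain ⟨k₀, hk₀, hprod⟩ := ih a (by omega)
    refine ⟨k₀, by omega, ?_⟩
    calc r ^ (a + 1 + d) = r ^ a * r ^ (d + 1) := by rw [← pow_add]; congr 1; omega
      _ ≤ (∏ k ∈ (Finset.range (a + 1)).erase k₀, f k) *
            ∏ k ∈ Finset.Ico (a + 1) (a + 1 + d + 1), f k :=
          mul_le_mul hprod hblock (by positivity) (Finset.prod_nonneg fun k _ => hf k)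
      _ = ∏ k ∈ (Finset.range (a + 1 + d + 1)).erase k₀, f k :=
          prod_erase_range_mul_prod_Ico f (by omega) (by omega)

end Tiling

theorem analytic_tiling_general {t δ : ℝ} (hδ : (1 + |t|) * δ ≤ 1 / 40) (m : ℕ) :
    (∀ z : ℂ, |z.im| ≤ δ →
      ∃ k₀ ≤ m, (3:ℝ) ^ (-(m : ℤ)) ≤
        ∏ k ∈ (Finset.range (m + 1)).erase k₀, ‖phiTildeK t k z‖) ∧
    (∀ x₀ : ℝ, ∀ k₀ k₁ : ℕ, k₀ ≤ m → k₁ ≤ m →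
      (∃ z₀ : ℂ, |z₀.re - x₀| ≤ δ ∧ |z₀.im| ≤ δ ∧
        ‖phiTildeK t k₀ z₀‖ < (3:ℝ) ^ (-(m : ℤ))) →
      (∃ z₁ : ℂ, |z₁.re - x₀| ≤ δ ∧ |z₁.im| ≤ δ ∧
        ‖phiTildeK t k₁ z₁‖ < (3:ℝ) ^ (-(m : ℤ))) →
      k₀ = k₁) := by
  have near {z : ℂ} {x : ℝ} (hre : |z.re - x| ≤ δ) (him : |z.im| ≤ δ) :
      (1 + |t|) * ‖z - x‖ ≤ 1 / 20 := by
    have hnorm : ‖z - x‖ ≤ δ + δ := by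
      simpa using (Complex.norm_le_abs_re_add_abs_im (z - x)).trans
        (add_le_add (by simpa using hre) (by simpa using him))
    nlinarith [abs_nonneg t]
  rw [zpow_neg, zpow_natCast, ← inv_pow]
  refine ⟨fun z hz => ?_, ?_⟩
  · have hz' : (1 + |t|) * ‖z - z.re‖ ≤ 1 / 20 :=
      near (by simpa using (abs_nonneg _).trans hz) hz
    exact exists_pow_le_prod_erase_range (by norm_num) (by norm_num) (fun _ => norm_nonneg _)
      (fun _ _ => one_le_norm_phiTildeK hz' hz') m
  · rintro x₀ k₀ k₁ hk₀ hk₁ ⟨z, hzre, hzim, hz⟩ ⟨w, hwre, hwim, hw⟩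
    have hz' := near hzre hzim
    have hw' := near hwre hwim
    exact le_antisymm (le_of_norm_phiTildeK_lt hz' hw' hk₀ hz hw)
      (le_of_norm_phiTildeK_lt hw' hz' hk₁ hw hz)

/-- Analytic tiling: (i) near the real axis, dropping one suitable factor of
`∏_{k=0}^m φ̃_k` leaves a product of modulus at least `3^{-m}`; (ii) in each
`δ`-rectangle at most one index `k₀` can have `|φ̃_{k₀}| < 3^{-m}` somewhere. -/
theorem analytic_tiling :
    ∃ δ > (0:ℝ), ∀ t ∈ Set.Icc (0:ℝ) 1, ∀ m : ℕ,
      (∀ z : ℂ, |z.im| ≤ δ →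
        ∃ k₀ ≤ m, (3:ℝ) ^ (-(m : ℤ)) ≤
          ∏ k ∈ (Finset.range (m + 1)).erase k₀, ‖phiTildeK t k z‖) ∧
      (∀ x₀ : ℝ, ∀ k₀ k₁ : ℕ, k₀ ≤ m → k₁ ≤ m →
        (∃ z₀ : ℂ, |z₀.re - x₀| ≤ δ ∧ |z₀.im| ≤ δ ∧
          ‖phiTildeK t k₀ z₀‖ < (3:ℝ) ^ (-(m : ℤ))) →
        (∃ z₁ : ℂ, |z₁.re - x₀| ≤ δ ∧ |z₁.im| ≤ δ ∧
          ‖phiTildeK t k₁ z₁‖ < (3:ℝ) ^ (-(m : ℤ))) →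
        k₀ = k₁) :=
  ⟨1 / 80, by norm_num, fun t ht => analytic_tiling_general <| by
    rw [abs_of_nonneg ht.1]; linarith [ht.2]⟩
end

section
/- There exists an absolute constant c > 0 such that: for every integer k' ≥ 0, all real numbers y_1, y_2 with |y_1| ≤ c·3^{-k'} and |y_2| ≤ c·3^{-k'}, and all w_1, w_2 ∈ ℂ satisfying |w_1| = e^{y_1}, |w_2| = e^{y_2}, and 1 + w_1 + w_2 = 0, one has, for every integer k with 1 ≤ k ≤ k' + 1: Re(1 + w_1^{3^k} + w_2^{3^k}) ≥ 2 (in particular |1 + w_1^{3^k} + w_2^{3^k}| ≥ 2). -/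
/-!
If `1 + w + v = 0` then also `1 + conj w + conj v = 0`, and multiplying the latter by `w * v` gives
`1 - w * v = (‖w‖² - 1) v + (‖v‖² - 1) w`. Since `w² + w + 1 = 1 - w * v`, the number
`w³ - 1 = (w - 1) (w² + w + 1)` is small, linearly in the defects `‖w‖² - 1` and `‖v‖² - 1`.
As long as `n * ‖w³ - 1‖ ≤ 1`, raising `w³` to the power `n` multiplies its distance to `1` by at
most `2 n`; for `n = 3 ^ (k - 1) ≤ 3 ^ k'` the bound `c * 3 ^ (-k')` on the logarithms of the
moduli compensates this factor.
-/

theorem norm_pow_sub_one_le_two_mul {R : Type*} [NormedCommRing R] [NormOneClass R] {z : R} {n : ℕ}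
    (h : n * ‖z - 1‖ ≤ 1) : ‖z ^ n - 1‖ ≤ 2 * (n * ‖z - 1‖) := by
  have hs : 0 ≤ n * ‖z - 1‖ := by positivity
  calc ‖z ^ n - 1‖ ≤ Real.exp (n * ‖z - 1‖) - 1 := by
        simpa using (Finset.range n).norm_prod_one_add_sub_one_le fun _ => z - 1
    _ ≤ |Real.exp (n * ‖z - 1‖) - 1| := le_abs_self _
    _ ≤ 2 * |n * ‖z - 1‖| := Real.abs_exp_sub_one_le (by rwa [abs_of_nonneg hs])
    _ = 2 * (n * ‖z - 1‖) := by rw [abs_of_nonneg hs]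

theorem abs_exp_sq_sub_one_le {y : ℝ} (hy : |y| ≤ 1 / 2) : |Real.exp y ^ 2 - 1| ≤ 4 * |y| := by
  have habs : |2 * y| = 2 * |y| := by rw [abs_mul, abs_two]
  calc |Real.exp y ^ 2 - 1| = |Real.exp (2 * y) - 1| := by rw [← Real.exp_nat_mul, Nat.cast_two]
    _ ≤ 2 * |2 * y| := Real.abs_exp_sub_one_le (by linarith)
    _ = 4 * |y| := by rw [habs]; ring

theorem natCast_pow_mul_mul_zpow_neg_le {b m n : ℕ} {c : ℝ} (hb : 0 < b) (hc : 0 ≤ c) (h : m ≤ n) :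
    ((b ^ m : ℕ) : ℝ) * (c * (b : ℝ) ^ (-(n : ℤ))) ≤ c := by
  have hpow : (b : ℝ) ^ m ≤ (b : ℝ) ^ n := pow_le_pow_right₀ (by exact_mod_cast hb) h
  rw [zpow_neg, zpow_natCast, Nat.cast_pow, mul_left_comm]
  exact mul_le_of_le_one_right hc (mul_inv_le_one_of_le₀ hpow (by positivity))

section RCLike

open ComplexConjugate

variable {𝕜 : Type*} [RCLike 𝕜] {w v : 𝕜} {δ : ℝ}

theorem cube_sub_one_eq_of_one_add_add_eq_zero (h : 1 + w + v = 0) :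
    w ^ 3 - 1 = (w - 1) * (((‖w‖ ^ 2 - 1 : ℝ) : 𝕜) * v + ((‖v‖ ^ 2 - 1 : ℝ) : 𝕜) * w) := by
  have hconj : 1 + conj w + conj v = 0 := by simpa using congrArg conj h
  push_cast
  rw [← RCLike.mul_conj, ← RCLike.mul_conj]
  linear_combination (w - 1) * ((w + 1) * h - w * v * hconj)

theorem norm_cube_sub_one_le (h : 1 + w + v = 0) (hδ : δ ≤ 3)
    (hw : |‖w‖ ^ 2 - 1| ≤ δ) (hv : |‖v‖ ^ 2 - 1| ≤ δ) : ‖w ^ 3 - 1‖ ≤ 12 * δ := by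
  have norm_le_two {z : 𝕜} (hz : |‖z‖ ^ 2 - 1| ≤ δ) : ‖z‖ ≤ 2 :=
    abs_le_of_sq_le_sq' (by linarith [(abs_le.1 hz).2]) zero_le_two |>.2
  have hw_sub : ‖w - 1‖ ≤ 3 := by
    linarith [norm_sub_le w 1, norm_one (α := 𝕜), norm_le_two hw]
  have hδ₀ : 0 ≤ δ := (abs_nonneg _).trans hw
  calc ‖w ^ 3 - 1‖ ≤ ‖w - 1‖ * (|‖w‖ ^ 2 - 1| * ‖v‖ + |‖v‖ ^ 2 - 1| * ‖w‖) := by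
        rw [cube_sub_one_eq_of_one_add_add_eq_zero h, norm_mul]
        gcongr
        exact (norm_add_le _ _).trans_eq (by simp only [norm_mul, RCLike.norm_ofReal])
    _ ≤ 3 * (δ * 2 + δ * 2) := by gcongr <;> exact norm_le_two ‹_›
    _ = 12 * δ := by ring

theorem half_le_re_pow_three_mul {y₁ y₂ t : ℝ} {n : ℕ}
    (hw : ‖w‖ = Real.exp y₁) (hv : ‖v‖ = Real.exp y₂) (h : 1 + w + v = 0)
    (hy₁ : |y₁| ≤ t) (hy₂ : |y₂| ≤ t) (hnt : n * t ≤ 1 / 192) :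
    1 / 2 ≤ RCLike.re (w ^ (3 * n)) := by
  rcases n.eq_zero_or_pos with rfl | hn
  · norm_num
  have ht : t ≤ 1 / 192 :=
    (le_mul_of_one_le_left ((abs_nonneg _).trans hy₁) (by exact_mod_cast hn)).trans hnt
  have defect {z : 𝕜} {y : ℝ} (hz : ‖z‖ = Real.exp y) (hy : |y| ≤ t) : |‖z‖ ^ 2 - 1| ≤ 4 * t := by
    rw [hz]
    linarith [abs_exp_sq_sub_one_le (y := y) (by linarith)]
  have hcube : n * ‖w ^ 3 - 1‖ ≤ 1 / 4 :=
    calc n * ‖w ^ 3 - 1‖ ≤ n * (12 * (4 * t)) := by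
          gcongr
          exact norm_cube_sub_one_le h (by linarith) (defect hw hy₁) (defect hv hy₂)
      _ ≤ 1 / 4 := by linarith
  have hpow : ‖w ^ (3 * n) - 1‖ ≤ 1 / 2 := by
    rw [pow_mul]
    linarith [norm_pow_sub_one_le_two_mul (hcube.trans (by norm_num))]
  have hre := (RCLike.abs_re_le_norm _).trans hpow
  rw [map_sub, RCLike.one_re] at hre
  linarith [(abs_le.1 hre).1]

end RCLike

theorem cube_root_stability_general {w₁ w₂ : ℂ} {y₁ y₂ t : ℝ} {n : ℕ}
    (hw₁ : ‖w₁‖ = Real.exp y₁) (hw₂ : ‖w₂‖ = Real.exp y₂) (h : 1 + w₁ + w₂ = 0)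
    (hy₁ : |y₁| ≤ t) (hy₂ : |y₂| ≤ t) (hnt : n * t ≤ 1 / 192) :
    2 ≤ (1 + w₁ ^ (3 * n) + w₂ ^ (3 * n)).re ∧ 2 ≤ ‖1 + w₁ ^ (3 * n) + w₂ ^ (3 * n)‖ := by
  have hre₁ : 1 / 2 ≤ (w₁ ^ (3 * n)).re := half_le_re_pow_three_mul hw₁ hw₂ h hy₁ hy₂ hnt
  have hre₂ : 1 / 2 ≤ (w₂ ^ (3 * n)).re :=
    half_le_re_pow_three_mul hw₂ hw₁ (add_right_comm 1 w₁ w₂ ▸ h) hy₂ hy₁ hnt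
  have hre : 2 ≤ (1 + w₁ ^ (3 * n) + w₂ ^ (3 * n)).re := by
    simp only [Complex.add_re, Complex.one_re]
    linarith
  exact ⟨hre, hre.trans (Complex.re_le_norm _)⟩

/-- Stability of the cube-root-of-unity identity: if `1 + w₁ + w₂ = 0` with
`|wⱼ| = e^{yⱼ}`, `|yⱼ| ≤ c·3^{-k'}`, then `Re(1 + w₁^{3^k} + w₂^{3^k}) ≥ 2`
(in particular the modulus is at least `2`) for all `1 ≤ k ≤ k' + 1`. -/
theorem cube_root_stability :
    ∃ c > (0:ℝ), ∀ k' : ℕ, ∀ y₁ y₂ : ℝ,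
      |y₁| ≤ c * (3:ℝ) ^ (-(k' : ℤ)) → |y₂| ≤ c * (3:ℝ) ^ (-(k' : ℤ)) →
      ∀ w₁ w₂ : ℂ, ‖w₁‖ = Real.exp y₁ → ‖w₂‖ = Real.exp y₂ →
      1 + w₁ + w₂ = 0 →
      ∀ k : ℕ, 1 ≤ k → k ≤ k' + 1 →
        2 ≤ (1 + w₁ ^ (3 ^ k) + w₂ ^ (3 ^ k)).re ∧
        2 ≤ ‖1 + w₁ ^ (3 ^ k) + w₂ ^ (3 ^ k)‖ := by
  refine ⟨1 / 192, by norm_num, fun k' y₁ y₂ hy₁ hy₂ w₁ w₂ hw₁ hw₂ h k hk hkk' => ?_⟩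
  obtain ⟨m, rfl⟩ := Nat.exists_eq_add_of_le hk
  rw [pow_add, pow_one]
  exact cube_root_stability_general hw₁ hw₂ h hy₁ hy₂ <|
    natCast_pow_mul_mul_zpow_neg_le (b := 3) (by norm_num) (by norm_num) (by lia)
end

section
/- There exist absolute constants c > 0 and δ_0 > 0 such that for every δ ∈ (0, δ_0], every t ∈ [0,1], all integers k*, k' with 0 ≤ k* ≤ k', and every z ∈ ℂ with |Im z| ≤ δ: if |1 + e^{-i 3^{-k'} z} + e^{-i t 3^{-k'} z}| < c·δ·3^{-k*}, then for every integer k with k' − k* ≤ k ≤ k' − 1, one has |1 + e^{-i 3^{-k} z} + e^{-i t 3^{-k} z}| ≥ 2. -/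
/-!
If `a` and `b` lie near the unit circle and `1 + a + b` is small, then `a` and `b` are close to the
two primitive cube roots of unity. Lowering the index of the factor by one cubes its exponentials,
so all preceding factors are close to `1 + 1 + 1 = 3`. Each cubing multiplies the error by about
`3`, and this loss is what the smallness `3 ^ (-kstar)` pays for.
-/

section PowersOfApproximateCubeRoots

lemma sq_add_self_add_one_eq (a : ℂ) :
    a ^ 2 + a + 1 = ((‖1 + a‖ ^ 2 - ‖a‖ ^ 2 : ℝ) : ℂ) * a + ((1 - ‖a‖ ^ 2 : ℝ) : ℂ) := by
  push_cast
  rw [← Complex.mul_conj', ← Complex.mul_conj', map_add, map_one]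
  ring

lemma norm_pow_sub_one_le_mul {R : Type*} [SeminormedRing R] {w : R} {M : ℝ} {n : ℕ}
    (hM : ∀ i < n, ‖w ^ i‖ ≤ M) : ‖w ^ n - 1‖ ≤ n * M * ‖w - 1‖ := by
  have hsum : ‖∑ i ∈ Finset.range n, w ^ i‖ ≤ n * M := by
    simpa only [Finset.sum_const, Finset.card_range, nsmul_eq_mul] using
      norm_sum_le_of_le (Finset.range n) fun i hi ↦ hM i (Finset.mem_range.1 hi)
  rw [← geom_sum_mul]
  exact (norm_mul_le _ _).trans (mul_le_mul_of_nonneg_right hsum (norm_nonneg _))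

lemma pow_le_exp_nat_mul {x η : ℝ} (hx0 : 0 ≤ x) (hx : x ≤ 1 + η) (n : ℕ) :
    x ^ n ≤ Real.exp (n * η) := by
  rw [Real.exp_nat_mul]
  gcongr
  linarith [Real.add_one_le_exp η]

lemma three_sub_norm_sub_norm_le (a b : ℂ) : 3 - ‖a - 1‖ - ‖b - 1‖ ≤ ‖1 + a + b‖ := by
  have h : ‖(3 : ℂ)‖ ≤ ‖1 + a + b‖ + ‖a - 1‖ + ‖b - 1‖ :=
    calc ‖(3 : ℂ)‖ = ‖1 + a + b - (a - 1) - (b - 1)‖ := by ring_nf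
      _ ≤ ‖1 + a + b‖ + ‖a - 1‖ + ‖b - 1‖ :=
        (norm_sub_le _ _).trans (add_le_add_left (norm_sub_le _ _) _)
  rw [Complex.norm_ofNat] at h
  linarith

variable {a b : ℂ} {η : ℝ}

lemma norm_sq_add_self_add_one_le (hη : η ≤ 1) (ha : |‖a‖ - 1| ≤ η) (hb : |‖b‖ - 1| ≤ η)
    (hab : ‖1 + a + b‖ ≤ η) : ‖a ^ 2 + a + 1‖ ≤ 33 * η := by
  have hη0 : 0 ≤ η := (norm_nonneg _).trans hab
  have h1ab : |‖1 + a‖ - ‖b‖| ≤ η := by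
    have h := abs_norm_sub_norm_le (1 + a) (-b)
    rw [norm_neg, sub_neg_eq_add] at h
    exact h.trans hab
  have ha2 : ‖a‖ ≤ 2 := by linarith [(abs_le.1 ha).2]
  have h1a : ‖1 + a‖ ≤ 3 := by linarith [(abs_le.1 hb).2, (abs_le.1 h1ab).2]
  have hdiff : |‖1 + a‖ - ‖a‖| ≤ 3 * η := by
    rw [abs_le] at *
    constructor <;> linarith
  have hcoeff : |‖1 + a‖ ^ 2 - ‖a‖ ^ 2| ≤ 5 * (3 * η) := by
    rw [sq_sub_sq, abs_mul, abs_of_nonneg (by positivity)]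
    exact mul_le_mul (by linarith) hdiff (abs_nonneg _) (by norm_num)
  have hconst : |1 - ‖a‖ ^ 2| ≤ 3 * η := by
    rw [abs_sub_comm, ← one_pow 2, sq_sub_sq, abs_mul, abs_of_nonneg (by positivity)]
    exact mul_le_mul (by linarith) ha (abs_nonneg _) (by norm_num)
  calc ‖a ^ 2 + a + 1‖
      ≤ |‖1 + a‖ ^ 2 - ‖a‖ ^ 2| * ‖a‖ + |1 - ‖a‖ ^ 2| := by
        rw [sq_add_self_add_one_eq]
        refine (norm_add_le _ _).trans_eq ?_
        simp only [norm_mul, Complex.norm_real, Real.norm_eq_abs]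
    _ ≤ 5 * (3 * η) * 2 + 3 * η := by gcongr
    _ = 33 * η := by ring

lemma norm_pow_three_sub_one_le (hη : η ≤ 1) (ha : |‖a‖ - 1| ≤ η) (hb : |‖b‖ - 1| ≤ η)
    (hab : ‖1 + a + b‖ ≤ η) : ‖a ^ 3 - 1‖ ≤ 100 * η := by
  have hη0 : 0 ≤ η := (norm_nonneg _).trans hab
  have hsub : ‖a - 1‖ ≤ 3 := by
    have := norm_sub_le a 1
    rw [norm_one] at this
    linarith [(abs_le.1 ha).2]
  calc ‖a ^ 3 - 1‖ = ‖a - 1‖ * ‖a ^ 2 + a + 1‖ := by rw [← norm_mul]; ring_nf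
    _ ≤ 3 * (33 * η) := by gcongr; exact norm_sq_add_self_add_one_le hη ha hb hab
    _ ≤ 100 * η := by linarith

lemma norm_pow_three_mul_sub_one_le {m : ℕ} (hm : (3 * m : ℕ) * η ≤ 1)
    (ha : |‖a‖ - 1| ≤ η) (hb : |‖b‖ - 1| ≤ η) (hab : ‖1 + a + b‖ ≤ η) :
    ‖a ^ (3 * m) - 1‖ ≤ 100 * ((3 * m : ℕ) * η) := by
  have hη0 : 0 ≤ η := (norm_nonneg _).trans hab
  rcases m.eq_zero_or_pos with rfl | hm0
  · simp
  have hη : η ≤ 1 := by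
    refine (le_mul_of_one_le_left hη0 ?_).trans hm
    exact_mod_cast (by lia : 1 ≤ 3 * m)
  have hpow : ∀ i < m, ‖(a ^ 3) ^ i‖ ≤ 3 := fun i hi ↦ by
    have hi' : (3 * i : ℕ) * η ≤ 1 := le_trans (by gcongr) hm
    calc ‖(a ^ 3) ^ i‖ = ‖a‖ ^ (3 * i) := by rw [← pow_mul, norm_pow]
      _ ≤ Real.exp ((3 * i : ℕ) * η) :=
        pow_le_exp_nat_mul (norm_nonneg a) (by linarith [(abs_le.1 ha).2]) _
      _ ≤ Real.exp 1 := Real.exp_le_exp.2 hi'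
      _ ≤ 3 := Real.exp_one_lt_three.le
  calc ‖a ^ (3 * m) - 1‖ ≤ m * 3 * ‖a ^ 3 - 1‖ := by
        rw [pow_mul]
        exact norm_pow_sub_one_le_mul hpow
    _ ≤ m * 3 * (100 * η) := by gcongr; exact norm_pow_three_sub_one_le hη ha hb hab
    _ = 100 * ((3 * m : ℕ) * η) := by push_cast; ring

lemma three_sub_le_norm_one_add_pow_add_pow {N : ℕ} (hN : 3 ∣ N)
    (ha : |‖a‖ - 1| ≤ η) (hb : |‖b‖ - 1| ≤ η) (hab : ‖1 + a + b‖ ≤ η) :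
    3 - 200 * (N * η) ≤ ‖1 + a ^ N + b ^ N‖ := by
  obtain ⟨m, rfl⟩ := hN
  rcases le_or_gt ((3 * m : ℕ) * η) 1 with hm | hm
  · have hA := norm_pow_three_mul_sub_one_le hm ha hb hab
    have hB := norm_pow_three_mul_sub_one_le hm hb ha (by rwa [add_right_comm])
    linarith [three_sub_norm_sub_norm_le (a ^ (3 * m)) (b ^ (3 * m))]
  · linarith [norm_nonneg (1 + a ^ (3 * m) + b ^ (3 * m))]

end PowersOfApproximateCubeRoots

/-- The exponential `e^{-i s 3^{-k} z}`; the factor `φ̃_k(z)` is `1` plus its values at `s = 1` and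
`s = t`. -/
noncomputable def scaledExp (s : ℝ) (k : ℕ) (z : ℂ) : ℂ :=
  Complex.exp (-Complex.I * (s : ℂ) * (3 : ℂ) ^ (-(k : ℤ)) * z)

lemma phiTildeK_eq_one_add_scaledExp (t : ℝ) (k : ℕ) (z : ℂ) :
    phiTildeK t k z = 1 + scaledExp 1 k z + scaledExp t k z := by
  simp only [phiTildeK, scaledExp, Complex.ofReal_one, mul_one]

lemma scaledExp_add_pow (s : ℝ) (k n : ℕ) (z : ℂ) :
    scaledExp s (k + n) z ^ 3 ^ n = scaledExp s k z := by
  have hscale : (3 : ℂ) ^ (-(k : ℤ)) = 3 ^ n * (3 : ℂ) ^ (-((k + n : ℕ) : ℤ)) := by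
    simp only [zpow_neg, zpow_natCast, pow_add]
    field_simp
  rw [scaledExp, scaledExp, ← Complex.exp_nat_mul, hscale]
  push_cast
  ring_nf

lemma norm_scaledExp (s : ℝ) (k : ℕ) (z : ℂ) :
    ‖scaledExp s k z‖ = Real.exp (s * z.im * (3 : ℝ) ^ (-(k : ℤ))) := by
  have hreal : -Complex.I * (s : ℂ) * (3 : ℂ) ^ (-(k : ℤ)) * z
      = ((s * (3 : ℝ) ^ (-(k : ℤ)) : ℝ) : ℂ) * (-Complex.I * z) := by
    push_cast
    ring
  have him : (-Complex.I * z).re = z.im := by simp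
  rw [scaledExp, Complex.norm_exp, hreal, Complex.re_ofReal_mul, him, mul_right_comm]

lemma abs_norm_scaledExp_sub_one_le {s δ : ℝ} {k n : ℕ} {z : ℂ} (hδ : δ ≤ 1)
    (hs : |s * z.im| ≤ δ) (hn : n ≤ k) :
    |‖scaledExp s k z‖ - 1| ≤ 2 * (δ * (3 : ℝ) ^ (-(n : ℤ))) := by
  have hδ0 : 0 ≤ δ := (abs_nonneg _).trans hs
  have hexponent : |s * z.im * (3 : ℝ) ^ (-(k : ℤ))| ≤ δ * (3 : ℝ) ^ (-(n : ℤ)) := by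
    rw [abs_mul, abs_of_pos (by positivity : (0 : ℝ) < 3 ^ (-(k : ℤ)))]
    gcongr
    norm_num
  have hle_one : δ * (3 : ℝ) ^ (-(n : ℤ)) ≤ 1 :=
    mul_le_one₀ hδ (by positivity) (zpow_le_one_of_nonpos₀ (by norm_num) (by lia))
  rw [norm_scaledExp]
  exact (Real.abs_exp_sub_one_le (hexponent.trans hle_one)).trans (by gcongr)

theorem preceding_factors_large_general {t δ : ℝ} {z : ℂ} {kstar k' k : ℕ}
    (hz : |z.im| ≤ δ) (htz : |t * z.im| ≤ δ)
    (hsmall : ‖phiTildeK t k' z‖ ≤ δ * (3 : ℝ) ^ (-(kstar : ℤ)))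
    (hk : k' ≤ k + kstar) (hkk' : k < k') :
    3 - 400 * δ ≤ ‖phiTildeK t k z‖ := by
  have hδ0 : 0 ≤ δ := (abs_nonneg _).trans hz
  rcases lt_or_ge 1 δ with hδ | hδ
  · linarith [norm_nonneg (phiTildeK t k z)]
  obtain ⟨n, rfl⟩ := Nat.exists_eq_add_of_lt hkk'
  rw [add_assoc] at hsmall
  have hn : n + 1 ≤ kstar := by lia
  have hone := abs_norm_scaledExp_sub_one_le (s := 1) hδ (by rwa [one_mul])
    (Nat.le_add_left (n + 1) k)
  have ht := abs_norm_scaledExp_sub_one_le hδ htz (Nat.le_add_left (n + 1) k)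
  have hsum : ‖1 + scaledExp 1 (k + (n + 1)) z + scaledExp t (k + (n + 1)) z‖
      ≤ 2 * (δ * (3 : ℝ) ^ (-((n + 1 : ℕ) : ℤ))) := by
    rw [← phiTildeK_eq_one_add_scaledExp]
    calc ‖phiTildeK t (k + (n + 1)) z‖ ≤ δ * (3 : ℝ) ^ (-(kstar : ℤ)) := hsmall
      _ ≤ δ * (3 : ℝ) ^ (-((n + 1 : ℕ) : ℤ)) := by gcongr; norm_num
      _ ≤ 2 * (δ * (3 : ℝ) ^ (-((n + 1 : ℕ) : ℤ))) :=
        le_mul_of_one_le_left (by positivity) one_le_two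
  have hlarge := three_sub_le_norm_one_add_pow_add_pow (dvd_pow_self 3 n.succ_ne_zero)
    hone ht hsum
  have hcancel : ((3 ^ (n + 1) : ℕ) : ℝ) * (2 * (δ * (3 : ℝ) ^ (-((n + 1 : ℕ) : ℤ)))) = 2 * δ := by
    rw [zpow_neg, zpow_natCast]
    push_cast
    field_simp
  rw [scaledExp_add_pow, scaledExp_add_pow, ← phiTildeK_eq_one_add_scaledExp, hcancel] at hlarge
  linarith

/-- If the factor of index `k'` is very small (smaller than `c·δ·3^{-k*}`) at a
point `z` near the real axis, then the `k*` preceding factors all have modulus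
at least `2` at `z`. -/
theorem preceding_factors_large :
    ∃ c > (0:ℝ), ∃ δ₀ > (0:ℝ), ∀ δ : ℝ, 0 < δ → δ ≤ δ₀ →
      ∀ t ∈ Set.Icc (0:ℝ) 1, ∀ kstar k' : ℕ, kstar ≤ k' →
      ∀ z : ℂ, |z.im| ≤ δ →
      ‖phiTildeK t k' z‖ < c * δ * (3:ℝ) ^ (-(kstar : ℤ)) →
      ∀ k : ℕ, k' - kstar ≤ k → k < k' →
        2 ≤ ‖phiTildeK t k z‖ := by
  refine ⟨1, one_pos, 1 / 400, by norm_num, fun δ _ hδ₀ t ht kstar k' _ z hz hsmall k hk hkk' ↦ ?_⟩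
  have htz : |t * z.im| ≤ δ := by
    rw [abs_mul, abs_of_nonneg ht.1]
    exact (mul_le_of_le_one_left (abs_nonneg _) ht.2).trans hz
  rw [one_mul] at hsmall
  linarith [preceding_factors_large_general hz htz hsmall.le (Nat.sub_le_iff_le_add.1 hk) hkk']
end
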